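/- arXiv:1403.6385 — 2 statements merged into one kernel-verified Lean document; each statement's English description precedes it below -/
import Mathlib

section
/- Let T, L, c ∈ [0,∞), ε ∈ (0,∞), γ ∈ (0,1], let μ : [0,∞) → ℝ be Borel measurable, let n ∈ ℕ₀ and θ = (t₀,…,t_n) ∈ [0,T]^{n+1} satisfy 0 = t₀ < t₁ < … < t_n = T and L|θ| < 1 (|θ| := max_k (t_k−t_{k−1})), assume (x−y)(μ(x)−μ(y)) ≤ L(x−y)² and |μ(x)−μ(y)| ≤ c|x−y|(1/x + 1/y + 1/(xy) + x^c + y^c) for all x, y ∈ (0,∞). Let (Ω, 𝓕, ℙ, (𝓕_t)_{t∈[0,T]}) be a filtered probability space whose filtration satisfies the usual conditions, let W : [0,T]×Ω → ℝ be a standard (𝓕_t)-Brownian motion, let X : [0,T]×Ω → [0,∞) be an (𝓕_t)-adapted stochastic process with continuous sample paths such that ℙ-a.s. ∫_0^T |μ(X_s)| ds < ∞, such that sup_{s∈[0,T]} ℙ[X_s = 0] = 0, and such that for every t ∈ [0,T] it holds ℙ-a.s. that X_t = X_0 + ∫_0^t μ(X_s) ds + W_t, and let Y : {t₀,…,t_n}×Ω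 → [0,∞) be measurable with Y₀ = X₀ and Y_{t_{k+1}} = Y_{t_k} + μ(Y_{t_{k+1}})(t_{k+1}−t_k) + (W_{t_{k+1}} − W_{t_k}) ℙ-a.s. for all k ∈ {0,…,n−1}. Then ‖ sup_{k∈{0,…,n}} |X_{t_k} − Y_{t_k}| ‖_{L^1(Ω;ℝ)} ≤ 2Tc·(1/(1−|θ|L))^n · ( ‖ sup_{u∈[0,T]} |X_u − X_{⌈u⌉_θ}| ‖_{L^{γ(1+1/ε)}(Ω;ℝ)} )^γ · sup_{u∈[0,T]} [ ‖ 2/(X_u)^{1+γ} ‖_{L^{1+ε}(Ω;ℝ)} + (γ/(1+γ))·‖ (X_u)^{1/γ−γ} ‖_{L^{1+ε}(Ω;ℝ)} + 2‖ (X_u)^{c+1−γ} ‖_{L^{1+ε}(Ω;ℝ)} + 1/(1+γ) ]. -/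
open MeasureTheory ProbabilityTheory Filter Set
open scoped ENNReal NNReal

noncomputable section

/-- The smallest grid point of the grid `t 0 < t 1 < ... < t n` which is `≥ s`. -/
def gridCeil (n : ℕ) (t : ℕ → ℝ) (s : ℝ) : ℝ :=
  sInf {x | (∃ i ≤ n, x = t i) ∧ s ≤ x}

/-- The mesh size `|θ| = max_k (t_k - t_{k-1})` of the grid `t 0 < t 1 < ... < t n`. -/
def gridMesh (n : ℕ) (t : ℕ → ℝ) : ℝ := ⨆ i : Fin n, (t (i.1 + 1) - t i.1)


/-! Subtracting the scheme from the integral equation, the noise increments cancel and the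
one-sided Lipschitz condition turns the implicit drift difference into a factor `1 - hL` in front
of the new error. Discrete Grönwall then bounds the whole error path by
`(1 - |θ|L)⁻ⁿ ∫₀ᵀ |μ(X_s) - μ(X_⌈s⌉)| ds`. The integrand is estimated in `L¹` by splitting
`|x - y| = |x - y|^γ |x - y|^(1 - γ)`: Young's inequality absorbs the second factor into the
singular local Lipschitz constant of `μ`, and Hölder's inequality separates the first one.

The hypotheses on `μ` only hold on `(0, ∞)`, so the scheme has to be almost surely positive. If
`Y_{k+1} = 0`, then the sum of `Y_k` and the noise increment is the constant `-μ(0)h`. This is a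
null event because the increment has no atoms and is independent of `Y_k`, which is adapted (up to
null sets) since `x ↦ x - hμ(x)` has a measurable left inverse. -/

/-! ### One-sided Lipschitz functions and the implicit step -/

/-- `f` satisfies the one-sided Lipschitz (monotonicity) condition on `s` with constant `L`. -/
def OneSidedLipschitzOnWith (L : ℝ) (f : ℝ → ℝ) (s : Set ℝ) : Prop :=
  ∀ x ∈ s, ∀ y ∈ s, (x - y) * (f x - f y) ≤ L * (x - y) ^ 2

namespace OneSidedLipschitzOnWith

variable {L h : ℝ} {f : ℝ → ℝ} {s : Set ℝ}

theorem abs_sub_le_of_implicit_step (hf : OneSidedLipschitzOnWith L f s) (hh : 0 ≤ h)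
    {x y e r : ℝ} (hx : x ∈ s) (hy : y ∈ s) (hstep : x - y = e + h * (f x - f y) + r) :
    (1 - h * L) * |x - y| ≤ |e| + |r| := by
  rcases eq_or_ne (x - y) 0 with h0 | h0
  · rw [h0, abs_zero, mul_zero]
    positivity
  · have hcross : (x - y) * (e + r) ≤ |x - y| * (|e| + |r|) :=
      (le_abs_self _).trans ((abs_mul _ _).trans_le (by gcongr; exact abs_add_le e r))
    have hdrift := mul_le_mul_of_nonneg_left (hf x hx y hy) hh
    refine le_of_mul_le_mul_left ?_ (abs_pos.2 h0)
    calc |x - y| * ((1 - h * L) * |x - y|)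
        = (1 - h * L) * (x - y) ^ 2 := by rw [← sq_abs (x - y)]; ring
      _ = (x - y) * (e + r) + h * ((x - y) * (f x - f y)) - h * (L * (x - y) ^ 2) := by
          linear_combination (x - y) * hstep
      _ ≤ |x - y| * (|e| + |r|) := by linarith

theorem injOn_sub_mul (hf : OneSidedLipschitzOnWith L f s) (hh : 0 ≤ h) (hhL : h * L < 1) :
    InjOn (fun x => x - h * f x) s := by
  intro x hx y hy hxy
  have hxy' : x - h * f x = y - h * f y := hxy
  have hle : (1 - h * L) * |x - y| ≤ |0| + |0| :=
    hf.abs_sub_le_of_implicit_step hh hx hy (by linear_combination hxy')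
  have habs : |x - y| = 0 := by nlinarith [abs_nonneg (x - y), abs_zero (α := ℝ)]
  exact sub_eq_zero.1 (abs_eq_zero.1 habs)

theorem exists_measurable_resolvent (hf : OneSidedLipschitzOnWith L f s) (hfm : Measurable f)
    (hs : MeasurableSet s) (hh : 0 ≤ h) (hhL : h * L < 1) :
    ∃ G : ℝ → ℝ, Measurable G ∧ ∀ x ∈ s, G (x - h * f x) = x := by
  have := hs.standardBorel
  have hemb : MeasurableEmbedding fun x : s => (x : ℝ) - h * f x :=
    Measurable.measurableEmbedding (by fun_prop)
      (injOn_iff_injective.1 (hf.injOn_sub_mul hh hhL))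
  obtain ⟨G, hG, hGf⟩ := hemb.exists_measurable_extend measurable_subtype_coe fun _ => ⟨0⟩
  exact ⟨G, hG, fun x hx => congrFun hGf ⟨x, hx⟩⟩

end OneSidedLipschitzOnWith

theorem le_one_div_pow_mul_add_sum {a : ℝ} (ha : 0 < a) (ha1 : a ≤ 1) {e R : ℕ → ℝ}
    {n : ℕ} (hR : ∀ k < n, 0 ≤ R k)
    (he : ∀ k < n, a * e (k + 1) ≤ e k + R k) :
    e n ≤ (1 / a) ^ n * (e 0 + ∑ j ∈ Finset.range n, R j) := by
  induction n with
  | zero => simp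
  | succ n ih =>
    have hpow : R n ≤ (1 / a) ^ n * R n :=
      le_mul_of_one_le_left (hR n n.lt_succ_self) (one_le_pow₀ (one_le_one_div ha ha1))
    calc e (n + 1) ≤ 1 / a * (e n + R n) := by
          rw [one_div_mul_eq_div, le_div_iff₀' ha]
          exact he n n.lt_succ_self
      _ ≤ 1 / a * ((1 / a) ^ n * (e 0 + ∑ j ∈ Finset.range n, R j) + (1 / a) ^ n * R n) := by
          gcongr
          exact ih (fun k hk => hR k (hk.trans n.lt_succ_self))
            fun k hk => he k (hk.trans n.lt_succ_self)
      _ = (1 / a) ^ (n + 1) * (e 0 + ∑ j ∈ Finset.range (n + 1), R j) := by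
          rw [Finset.sum_range_succ]
          ring

/-! ### Grids -/

/-- `t 0 < t 1 < ... < t n` is a grid of `[0, T]`; the values `t i` with `n < i` are irrelevant. -/
structure IsGrid (n : ℕ) (t : ℕ → ℝ) (T : ℝ) : Prop where
  zero : t 0 = 0
  last : t n = T
  lt_succ : ∀ i < n, t i < t (i + 1)

theorem sub_le_gridMesh (t : ℕ → ℝ) {n k : ℕ} (hk : k < n) : t (k + 1) - t k ≤ gridMesh n t :=
  le_ciSup (f := fun i : Fin n => t (i.1 + 1) - t i.1) (finite_range _).bddAbove ⟨k, hk⟩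

namespace IsGrid

variable {n : ℕ} {t : ℕ → ℝ} {T : ℝ}

theorem monotoneOn (ht : IsGrid n t T) : MonotoneOn t (Iic n) :=
  monotoneOn_of_le_add_one ordConnected_Iic fun i _ _ hi => (ht.lt_succ i hi).le

theorem mem_Icc (ht : IsGrid n t T) {k : ℕ} (hk : k ≤ n) : t k ∈ Icc 0 T :=
  ⟨ht.zero ▸ ht.monotoneOn n.zero_le hk k.zero_le, ht.last ▸ ht.monotoneOn hk self_mem_Iic hk⟩

theorem nonneg (ht : IsGrid n t T) : 0 ≤ T :=
  ht.zero ▸ (ht.mem_Icc n.zero_le).2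

theorem uIcc_subset (ht : IsGrid n t T) {k : ℕ} (hk : k < n) :
    uIcc (t k) (t (k + 1)) ⊆ uIcc 0 T := by
  rw [uIcc_of_le (ht.lt_succ k hk).le, uIcc_of_le ht.nonneg]
  exact Icc_subset_Icc (ht.mem_Icc hk.le).1 (ht.mem_Icc hk).2

theorem gridMesh_nonneg (ht : IsGrid n t T) : 0 ≤ gridMesh n t :=
  Real.iSup_nonneg fun i => (sub_pos.2 (ht.lt_succ i.1 i.2)).le

theorem isLeast_gridCeil (ht : IsGrid n t T) {s : ℝ} (hs : s ≤ T) :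
    IsLeast {x | (∃ i ≤ n, x = t i) ∧ s ≤ x} (gridCeil n t s) := by
  have hfin : {x | (∃ i ≤ n, x = t i) ∧ s ≤ x}.Finite := by
    refine ((finite_Iic n).image t).subset ?_
    rintro _ ⟨⟨i, hi, rfl⟩, -⟩
    exact mem_image_of_mem t hi
  have hne : {x | (∃ i ≤ n, x = t i) ∧ s ≤ x}.Nonempty := ⟨t n, ⟨n, le_rfl, rfl⟩, ht.last ▸ hs⟩
  exact ⟨hne.csInf_mem hfin, fun x hx => csInf_le hfin.bddBelow hx⟩

theorem gridCeil_eq (ht : IsGrid n t T) {k : ℕ} (hk : k < n) {s : ℝ}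
    (hs : s ∈ Ioc (t k) (t (k + 1))) : gridCeil n t s = t (k + 1) := by
  refine IsLeast.csInf_eq ⟨⟨⟨k + 1, hk, rfl⟩, hs.2⟩, ?_⟩
  rintro _ ⟨⟨i, hi, rfl⟩, hsi⟩
  have hki : k < i := by
    by_contra! hik
    exact (hs.1.trans_le hsi).not_ge (ht.monotoneOn hi hk.le hik)
  exact ht.monotoneOn hk hi hki

theorem gridCeil_mem_Icc (ht : IsGrid n t T) {s : ℝ} (hs : s ≤ T) : gridCeil n t s ∈ Icc 0 T := by
  obtain ⟨⟨i, hi, heq⟩, -⟩ := (ht.isLeast_gridCeil hs).1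
  exact heq ▸ ht.mem_Icc hi

theorem monotoneOn_gridCeil (ht : IsGrid n t T) : MonotoneOn (gridCeil n t) (Iic T) := by
  intro s hs s' hs' hss'
  obtain ⟨hgrid, hle⟩ := (ht.isLeast_gridCeil hs').1
  exact (ht.isLeast_gridCeil hs).2 ⟨hgrid, hss'.trans hle⟩

end IsGrid

/-- The modulus `sup_{u ∈ [0, T]} |x_u - x_⌈u⌉|` of a path `x` along the grid; it takes the junk
value `0` if the supremum is infinite, which does not happen for paths continuous on `[0, T]`. -/
def gridOscillation (n : ℕ) (t : ℕ → ℝ) (T : ℝ) (x : ℝ → ℝ) : ℝ :=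
  ⨆ u : Icc (0 : ℝ) T, |x u.1 - x (gridCeil n t u.1)|

theorem IsGrid.abs_sub_gridCeil_le_gridOscillation {n : ℕ} {t : ℕ → ℝ} {T : ℝ}
    (ht : IsGrid n t T) {x : ℝ → ℝ} (hx : ContinuousOn x (Icc 0 T)) {s : ℝ} (hs : s ∈ Icc 0 T) :
    |x s - x (gridCeil n t s)| ≤ gridOscillation n t T x := by
  obtain ⟨C, hC⟩ := isCompact_Icc.exists_bound_of_continuousOn hx
  have hbdd : BddAbove (range fun u : Icc (0 : ℝ) T => |x u.1 - x (gridCeil n t u.1)|) := by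
    refine ⟨C + C, ?_⟩
    rintro _ ⟨u, rfl⟩
    exact (abs_sub _ _).trans (add_le_add (hC _ u.2) (hC _ (ht.gridCeil_mem_Icc u.2.2)))
  exact le_ciSup hbdd ⟨s, hs⟩

/-! ### The pathwise error bound -/

section Pathwise

variable {n : ℕ} {t : ℕ → ℝ} {T : ℝ}

theorem IsGrid.eqOn_sub_gridCeil (ht : IsGrid n t T) (f x : ℝ → ℝ) {k : ℕ} (hk : k < n) :
    EqOn (fun s => f (x s) - f (x (t (k + 1)))) (fun s => f (x s) - f (x (gridCeil n t s)))
      (uIoc (t k) (t (k + 1))) := by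
  intro s hs
  rw [uIoc_of_le (ht.lt_succ k hk).le] at hs
  simp only [ht.gridCeil_eq hk hs]

theorem IsGrid.intervalIntegrable_sub_gridCeil (ht : IsGrid n t T) {f x : ℝ → ℝ}
    (hint : IntervalIntegrable (fun s => f (x s)) volume 0 T) {k : ℕ} (hk : k < n) :
    IntervalIntegrable (fun s => f (x s) - f (x (gridCeil n t s))) volume (t k) (t (k + 1)) :=
  ((hint.mono_set (ht.uIcc_subset hk)).sub intervalIntegrable_const).congr
    (ht.eqOn_sub_gridCeil f x hk)

theorem IsGrid.integral_sub_gridCeil (ht : IsGrid n t T) {f x : ℝ → ℝ}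
    (hint : IntervalIntegrable (fun s => f (x s)) volume 0 T) {k : ℕ} (hk : k < n) :
    ∫ s in t k..t (k + 1), (f (x s) - f (x (gridCeil n t s))) =
      (∫ s in t k..t (k + 1), f (x s)) - (t (k + 1) - t k) * f (x (t (k + 1))) := by
  rw [← intervalIntegral.integral_congr_ae (.of_forall (ht.eqOn_sub_gridCeil f x hk)),
    intervalIntegral.integral_sub (hint.mono_set (ht.uIcc_subset hk)) intervalIntegrable_const,
    intervalIntegral.integral_const, smul_eq_mul]

theorem IsGrid.abs_sub_succ_le_of_driftImplicitEuler (ht : IsGrid n t T) {L : ℝ} {f : ℝ → ℝ}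
    {s : Set ℝ} (hL : 0 ≤ L) (hf : OneSidedLipschitzOnWith L f s) {x : ℝ → ℝ}
    (hint : IntervalIntegrable (fun s => f (x s)) volume 0 T) {k : ℕ} (hk : k < n) {y y' ξ : ℝ}
    (hx : x (t (k + 1)) ∈ s) (hy' : y' ∈ s)
    (hxstep : x (t (k + 1)) = x (t k) + (∫ s in t k..t (k + 1), f (x s)) + ξ)
    (hystep : y' = y + f y' * (t (k + 1) - t k) + ξ) :
    (1 - gridMesh n t * L) * |x (t (k + 1)) - y'| ≤
      |x (t k) - y| + ∫ s in t k..t (k + 1), |f (x s) - f (x (gridCeil n t s))| := by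
  have hlt := ht.lt_succ k hk
  have hdiff : x (t (k + 1)) - y' = (x (t k) - y) +
      (t (k + 1) - t k) * (f (x (t (k + 1))) - f y') +
      ∫ s in t k..t (k + 1), (f (x s) - f (x (gridCeil n t s))) := by
    rw [ht.integral_sub_gridCeil hint hk]
    linear_combination hxstep - hystep
  calc (1 - gridMesh n t * L) * |x (t (k + 1)) - y'|
      ≤ (1 - (t (k + 1) - t k) * L) * |x (t (k + 1)) - y'| := by
        gcongr
        exact sub_le_gridMesh t hk
    _ ≤ |x (t k) - y| + |∫ s in t k..t (k + 1), (f (x s) - f (x (gridCeil n t s)))| :=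
        hf.abs_sub_le_of_implicit_step (sub_pos.2 hlt).le hx hy' hdiff
    _ ≤ _ := by
        gcongr
        exact intervalIntegral.abs_integral_le_integral_abs hlt.le

theorem IsGrid.abs_sub_le_of_driftImplicitEuler (ht : IsGrid n t T) {L : ℝ} {f : ℝ → ℝ} {s : Set ℝ}
    (hL : 0 ≤ L) (hmesh : gridMesh n t * L < 1) (hf : OneSidedLipschitzOnWith L f s)
    {x : ℝ → ℝ} {y ξ : ℕ → ℝ} (hint : IntervalIntegrable (fun s => f (x s)) volume 0 T)
    (hx : ∀ k ≤ n, x (t k) ∈ s) (hy : ∀ k ≤ n, y k ∈ s) (h0 : y 0 = x 0)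
    (hxstep : ∀ k < n, x (t (k + 1)) = x (t k) + (∫ s in t k..t (k + 1), f (x s)) + ξ k)
    (hystep : ∀ k < n, y (k + 1) = y k + f (y (k + 1)) * (t (k + 1) - t k) + ξ k)
    {k : ℕ} (hk : k ≤ n) :
    |x (t k) - y k| ≤ (1 / (1 - gridMesh n t * L)) ^ n *
      ∫ s in (0)..T, |f (x s) - f (x (gridCeil n t s))| := by
  set R : ℕ → ℝ := fun j => ∫ s in t j..t (j + 1), |f (x s) - f (x (gridCeil n t s))|
  have hR : ∀ j < n, 0 ≤ R j := fun j hj =>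
    intervalIntegral.integral_nonneg (ht.lt_succ j hj).le fun _ _ => abs_nonneg _
  have hpos : 0 < 1 - gridMesh n t * L := by linarith
  have hle_one : 1 - gridMesh n t * L ≤ 1 := by linarith [mul_nonneg ht.gridMesh_nonneg hL]
  calc |x (t k) - y k|
      ≤ (1 / (1 - gridMesh n t * L)) ^ k * (|x (t 0) - y 0| + ∑ j ∈ Finset.range k, R j) :=
        le_one_div_pow_mul_add_sum (e := fun j => |x (t j) - y j|) hpos hle_one
          (fun j hj => hR j (hj.trans_le hk)) fun j hj =>
          have hjn := hj.trans_le hk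
          ht.abs_sub_succ_le_of_driftImplicitEuler hL hf hint hjn (hx _ hjn) (hy _ hjn)
            (hxstep j hjn) (hystep j hjn)
    _ = (1 / (1 - gridMesh n t * L)) ^ k * ∑ j ∈ Finset.range k, R j := by
        rw [h0, ht.zero, sub_self, abs_zero, zero_add]
    _ ≤ (1 / (1 - gridMesh n t * L)) ^ n * ∑ j ∈ Finset.range n, R j := by
        have hsum : ∑ j ∈ Finset.range k, R j ≤ ∑ j ∈ Finset.range n, R j :=
          Finset.sum_le_sum_of_subset_of_nonneg (Finset.range_subset_range.2 hk)
            fun j hj _ => hR j (Finset.mem_range.1 hj)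
        have hsum_nonneg : 0 ≤ ∑ j ∈ Finset.range k, R j :=
          Finset.sum_nonneg fun j hj => hR j ((Finset.mem_range.1 hj).trans_le hk)
        gcongr
        exact one_le_one_div hpos hle_one
    _ = _ := by
        rw [← ht.zero, ← ht.last, ← intervalIntegral.sum_integral_adjacent_intervals fun j hj =>
          (ht.intervalIntegrable_sub_gridCeil hint hj).abs]

end Pathwise

/-! ### Positivity of the scheme -/

theorem nullSingletonClass_conv {M : Type*} [AddMonoid M] [IsLeftCancelAdd M] [MeasurableSpace M]
    [MeasurableAdd₂ M] [MeasurableSingletonClass M] (ρ ν : Measure M) [SFinite ν]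
    [NullSingletonClass ν] : NullSingletonClass (ρ.conv ν) where
  measure_singleton a := by
    have hmeas : Measurable fun p : M × M => p.1 + p.2 := measurable_add
    rw [Measure.conv, Measure.map_apply hmeas (measurableSet_singleton a)]
    refine Measure.measure_prod_null_of_ae_null (hmeas (measurableSet_singleton a))
      (.of_forall fun x => ?_)
    have hslice : (Prod.mk x ⁻¹' ((fun p : M × M => p.1 + p.2) ⁻¹' {a})).Subsingleton :=
      fun _ hz _ hw => add_left_cancel (hz.trans hw.symm)
    exact hslice.measure_zero ν

section Scheme

variable {Ω : Type*} {m mΩ : MeasurableSpace Ω} {P : Measure Ω}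

theorem ae_add_ne_of_indepFun {M : Type*} [AddMonoid M] [IsLeftCancelAdd M] [MeasurableSpace M]
    [MeasurableAdd₂ M] [MeasurableSingletonClass M] [IsFiniteMeasure P] {Z D : Ω → M}
    (hZ : AEMeasurable Z P) (hD : AEMeasurable D P) (hZD : IndepFun Z D P)
    [NullSingletonClass (P.map D)] (a : M) : ∀ᵐ ω ∂P, Z ω + D ω ≠ a := by
  have : NullSingletonClass (P.map (Z + D)) :=
    hZD.map_add_eq_map_conv_map₀ hZ hD ▸ nullSingletonClass_conv _ _
  exact ae_of_ae_map (hZ.add hD) (compl_mem_ae_iff.2 (measure_singleton a))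

variable {f : ℝ → ℝ} {h : ℝ} {y y' D : Ω → ℝ}

theorem ae_pos_of_implicit_step [IsFiniteMeasure P] (hm : m ≤ mΩ)
    (hy : AEStronglyMeasurable[m] y P) (hD : Measurable D)
    (hindep : Indep (MeasurableSpace.comap D inferInstance) m P) [NullSingletonClass (P.map D)]
    (hy' : ∀ ω, 0 ≤ y' ω) (hstep : ∀ᵐ ω ∂P, y' ω = y ω + f (y' ω) * h + D ω) :
    ∀ᵐ ω ∂P, 0 < y' ω := by
  have hmk : Measurable[m] (hy.mk y) := hy.stronglyMeasurable_mk.measurable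
  have hyD : IndepFun y D P :=
    IndepFun.congr (indep_of_indep_of_le_left hindep.symm hmk.comap_le) hy.ae_eq_mk.symm ae_eq_rfl
  filter_upwards [hstep, ae_add_ne_of_indepFun (hy.mono hm).aemeasurable hD.aemeasurable hyD
    (-(f 0 * h))] with ω hω hne
  refine (hy' ω).lt_of_ne fun h0 => hne ?_
  rw [← h0] at hω
  linarith

theorem OneSidedLipschitzOnWith.aestronglyMeasurable_of_implicit_step {L : ℝ} {s : Set ℝ}
    (hf : OneSidedLipschitzOnWith L f s) (hfm : Measurable f) (hs : MeasurableSet s) (hh : 0 ≤ h)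
    (hhL : h * L < 1) (hy : AEStronglyMeasurable[m] y P) (hD : Measurable[m] D)
    (hy' : ∀ᵐ ω ∂P, y' ω ∈ s) (hstep : ∀ᵐ ω ∂P, y' ω = y ω + f (y' ω) * h + D ω) :
    AEStronglyMeasurable[m] y' P := by
  obtain ⟨G, hG, hGf⟩ := hf.exists_measurable_resolvent hfm hs hh hhL
  have hmk : Measurable[m] (hy.mk y) := hy.stronglyMeasurable_mk.measurable
  refine ⟨fun ω => G (hy.mk y ω + D ω), (hG.comp (hmk.add hD)).stronglyMeasurable, ?_⟩
  filter_upwards [hy', hstep, hy.ae_eq_mk] with ω hmem hω hyω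
  rw [← hyω, show y ω + D ω = y' ω - h * f (y' ω) by linarith, hGf _ hmem]

theorem IsGrid.ae_pos_of_driftImplicitEuler [IsFiniteMeasure P] {n : ℕ} {t : ℕ → ℝ} {T : ℝ}
    (ht : IsGrid n t T) {ℱ : Filtration ℝ mΩ} {L : ℝ} (hL : 0 ≤ L) (hmesh : gridMesh n t * L < 1)
    (hf : OneSidedLipschitzOnWith L f (Ioi 0)) (hfm : Measurable f) {W : ℝ → Ω → ℝ}
    (hWadapt : ∀ s ∈ Icc 0 T, Measurable[ℱ s] (W s))
    (hWindep : ∀ s u, 0 ≤ s → s ≤ u → u ≤ T →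
      Indep (MeasurableSpace.comap (fun ω => W u ω - W s ω) inferInstance) (ℱ s) P)
    (hWnull : ∀ s u, 0 ≤ s → s < u → u ≤ T →
      NullSingletonClass (P.map fun ω => W u ω - W s ω))
    {Y : ℕ → Ω → ℝ} (hY0 : Measurable[ℱ 0] (Y 0)) (hY0pos : ∀ᵐ ω ∂P, 0 < Y 0 ω)
    (hYnonneg : ∀ k ≤ n, ∀ ω, 0 ≤ Y k ω)
    (hYrec : ∀ k < n, ∀ᵐ ω ∂P, Y (k + 1) ω =
      Y k ω + f (Y (k + 1) ω) * (t (k + 1) - t k) + (W (t (k + 1)) ω - W (t k) ω))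
    {k : ℕ} (hk : k ≤ n) : ∀ᵐ ω ∂P, 0 < Y k ω := by
  suffices AEStronglyMeasurable[ℱ (t k)] (Y k) P ∧ ∀ᵐ ω ∂P, 0 < Y k ω from this.2
  induction k with
  | zero => exact ⟨ht.zero ▸ hY0.stronglyMeasurable.aestronglyMeasurable, hY0pos⟩
  | succ k ih =>
    obtain ⟨hYm, -⟩ := ih (k.le_succ.trans hk)
    have hlt := ht.lt_succ k hk
    have hmem := ht.mem_Icc (k.le_succ.trans hk)
    have hmem' := ht.mem_Icc hk
    have hstepL : (t (k + 1) - t k) * L < 1 :=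
      (mul_le_mul_of_nonneg_right (sub_le_gridMesh t hk) hL).trans_lt hmesh
    have hle : ℱ (t k) ≤ ℱ (t (k + 1)) := ℱ.mono hlt.le
    have hD : Measurable[ℱ (t (k + 1))] fun ω => W (t (k + 1)) ω - W (t k) ω :=
      (hWadapt _ hmem').sub ((hWadapt _ hmem).mono hle le_rfl)
    have := hWnull _ _ hmem.1 hlt hmem'.2
    have hpos : ∀ᵐ ω ∂P, 0 < Y (k + 1) ω :=
      ae_pos_of_implicit_step (ℱ.le _) hYm (hD.mono (ℱ.le _) le_rfl)
        (hWindep _ _ hmem.1 hlt.le hmem'.2) (hYnonneg _ hk) (hYrec k hk)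
    exact ⟨hf.aestronglyMeasurable_of_implicit_step hfm measurableSet_Ioi (sub_pos.2 hlt).le
      hstepL (hYm.mono hle) hD hpos (hYrec k hk), hpos⟩

end Scheme

/-! ### Young's inequality for the singular local Lipschitz constant -/

section Young

variable {γ x y : ℝ}

theorem mul_le_rpow_one_add_add_rpow {a b : ℝ} (ha : 0 ≤ a) (hb : 0 ≤ b) (hγ : 0 < γ) :
    a * b ≤ a ^ (1 + γ) / (1 + γ) + γ / (1 + γ) * b ^ ((1 + γ) / γ) := by
  have hconj : (1 + γ).HolderConjugate ((1 + γ) / γ) :=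
    Real.holderConjugate_iff.2 ⟨by linarith, by field_simp⟩
  refine (Real.young_inequality_of_nonneg ha hb hconj).trans_eq ?_
  field_simp

theorem rpow_one_sub_mul_inv (hy : 0 < y) : y ^ (1 - γ) * y⁻¹ = y⁻¹ ^ γ := by
  rw [Real.inv_rpow hy.le, ← Real.rpow_neg hy.le, ← Real.rpow_neg_one y, ← Real.rpow_add hy]
  ring_nf

theorem inv_mul_rpow_one_sub_le (hγ : 0 < γ) (hx : 0 ≤ x) (hy : 0 ≤ y) :
    x⁻¹ * y ^ (1 - γ) ≤ x⁻¹ ^ (1 + γ) / (1 + γ) + γ / (1 + γ) * y ^ (1 / γ - γ) := by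
  have hexp : (1 - γ) * ((1 + γ) / γ) = 1 / γ - γ := by field_simp; ring
  rw [← hexp, Real.rpow_mul hy]
  exact mul_le_rpow_one_add_add_rpow (inv_nonneg.2 hx) (by positivity) hγ

theorem rpow_one_sub_mul_inv_le (hγ : 0 < γ) (hy : 0 < y) :
    y ^ (1 - γ) * y⁻¹ ≤ 1 / (1 + γ) + γ / (1 + γ) * y⁻¹ ^ (1 + γ) := by
  have hexp : γ * ((1 + γ) / γ) = 1 + γ := mul_div_cancel₀ _ hγ.ne'
  have hyoung := mul_le_rpow_one_add_add_rpow zero_le_one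
    (Real.rpow_nonneg (inv_nonneg.2 hy.le) γ) hγ
  rwa [← Real.rpow_mul (inv_nonneg.2 hy.le), hexp, Real.one_rpow, one_mul,
    ← rpow_one_sub_mul_inv hy] at hyoung

theorem rpow_one_sub_mul_inv_mul_le (hγ : 0 ≤ γ) (hx : 0 < x) (hxy : x ≤ y) :
    y ^ (1 - γ) * (x * y)⁻¹ ≤ x⁻¹ ^ (1 + γ) := by
  have hy := hx.trans_le hxy
  calc y ^ (1 - γ) * (x * y)⁻¹ = y⁻¹ ^ γ * x⁻¹ := by
        rw [← rpow_one_sub_mul_inv hy, mul_inv]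
        ring
    _ ≤ x⁻¹ ^ γ * x⁻¹ := by gcongr
    _ = x⁻¹ ^ (1 + γ) := by
        rw [add_comm, Real.rpow_add (inv_pos.2 hx), Real.rpow_one]

/-- The one-point weight that dominates, after multiplication by `|x - y| ^ (1 - γ)`, the local
Lipschitz constant `1 / x + 1 / y + 1 / (x * y) + x ^ c + y ^ c` of the drift. -/
def besselWeight (c γ x : ℝ) : ℝ :=
  2 * (x ^ (1 + γ))⁻¹ + γ / (1 + γ) * x ^ (1 / γ - γ) + 2 * x ^ (c + 1 - γ) + 1 / (1 + γ)

variable {c : ℝ}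

theorem besselWeight_nonneg (hγ : 0 ≤ γ) (hx : 0 ≤ x) : 0 ≤ besselWeight c γ x := by
  unfold besselWeight
  positivity

@[fun_prop]
theorem measurable_besselWeight : Measurable (besselWeight c γ) := by
  unfold besselWeight
  fun_prop

theorem rpow_one_sub_mul_le_besselWeight_add (hc : 0 ≤ c) (hγ : 0 < γ) (hx : 0 < x) (hxy : x ≤ y) :
    y ^ (1 - γ) * (1 / x + 1 / y + 1 / (x * y) + x ^ c + y ^ c) ≤
      besselWeight c γ x + besselWeight c γ y := by
  have hy := hx.trans_le hxy
  have hyc : y ^ (1 - γ) * y ^ c = y ^ (c + 1 - γ) := by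
    rw [← Real.rpow_add hy]
    ring_nf
  have hxc : y ^ (1 - γ) * x ^ c ≤ y ^ (c + 1 - γ) := by
    rw [← hyc]
    gcongr
  have hinv_x := inv_mul_rpow_one_sub_le hγ hx.le hy.le
  have hinv_y := rpow_one_sub_mul_inv_le hγ hy
  have hinv_xy := rpow_one_sub_mul_inv_mul_le hγ.le hx hxy
  have hx_div : x⁻¹ ^ (1 + γ) / (1 + γ) ≤ x⁻¹ ^ (1 + γ) :=
    div_le_self (by positivity) (by linarith)
  have hy_mul : γ / (1 + γ) * y⁻¹ ^ (1 + γ) ≤ y⁻¹ ^ (1 + γ) :=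
    mul_le_of_le_one_left (by positivity) ((div_le_one (by linarith)).2 (by linarith))
  have hx_rpow : 0 ≤ γ / (1 + γ) * x ^ (1 / γ - γ) := by positivity
  have hx_rpow' : 0 ≤ x ^ (c + 1 - γ) := by positivity
  have hy_inv : 0 ≤ y⁻¹ ^ (1 + γ) := by positivity
  have hconst : 0 ≤ 1 / (1 + γ) := by positivity
  simp only [besselWeight, ← Real.inv_rpow hx.le, ← Real.inv_rpow hy.le, one_div, mul_add] at *
  linarith

theorem abs_sub_rpow_one_sub_mul_le (hc : 0 ≤ c) (hγ : 0 < γ) (hγ1 : γ ≤ 1) (hx : 0 < x)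
    (hy : 0 < y) :
    |x - y| ^ (1 - γ) * (1 / x + 1 / y + 1 / (x * y) + x ^ c + y ^ c) ≤
      besselWeight c γ x + besselWeight c γ y := by
  wlog hxy : x ≤ y generalizing x y
  · rw [abs_sub_comm, mul_comm x y, add_comm (besselWeight c γ x), add_comm (1 / x), add_right_comm]
    exact this hy hx (le_of_not_ge hxy)
  refine (mul_le_mul_of_nonneg_right ?_ (by positivity)).trans
    (rpow_one_sub_mul_le_besselWeight_add hc hγ hx hxy)
  have habs : |x - y| ≤ y := by
    rw [abs_sub_comm, abs_of_nonneg (sub_nonneg.2 hxy)]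
    exact sub_le_self y hx.le
  exact Real.rpow_le_rpow (abs_nonneg _) habs (sub_nonneg.2 hγ1)

theorem abs_sub_mul_le_besselWeight_add (hc : 0 ≤ c) (hγ : 0 < γ) (hγ1 : γ ≤ 1) (hx : 0 < x)
    (hy : 0 < y) :
    |x - y| * (1 / x + 1 / y + 1 / (x * y) + x ^ c + y ^ c) ≤
      |x - y| ^ γ * (besselWeight c γ x + besselWeight c γ y) := by
  have hsplit : |x - y| = |x - y| ^ γ * |x - y| ^ (1 - γ) := by
    rw [← Real.rpow_add' (abs_nonneg _) (by norm_num), add_sub_cancel, Real.rpow_one]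
  calc |x - y| * (1 / x + 1 / y + 1 / (x * y) + x ^ c + y ^ c)
      = |x - y| ^ γ *
          (|x - y| ^ (1 - γ) * (1 / x + 1 / y + 1 / (x * y) + x ^ c + y ^ c)) := by
        rw [← mul_assoc, ← hsplit]
    _ ≤ |x - y| ^ γ * (besselWeight c γ x + besselWeight c γ y) := by
        gcongr
        exact abs_sub_rpow_one_sub_mul_le hc hγ hγ1 hx hy

end Young

/-! ### The `L¹` estimate of the drift difference -/

section Moments

variable {Ω : Type*} {mΩ : MeasurableSpace Ω} {P : Measure Ω}

/-- The moment functional of `Z = X_u` in the error bound. The negative moment is an `ℝ≥0∞`-valued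
integral, so that it is `∞` if `Z` vanishes with positive probability. -/
def besselMoment (P : Measure Ω) (c ε γ : ℝ) (Z : Ω → ℝ) : ℝ≥0∞ :=
  (∫⁻ ω, ((2 : ℝ≥0∞) * ((ENNReal.ofReal (Z ω)) ^ (1 + γ))⁻¹) ^ (1 + ε) ∂P) ^ (1 / (1 + ε))
    + ENNReal.ofReal (γ / (1 + γ)) *
        eLpNorm (fun ω => (Z ω) ^ (1 / γ - γ)) (ENNReal.ofReal (1 + ε)) P
    + 2 * eLpNorm (fun ω => (Z ω) ^ (c + 1 - γ)) (ENNReal.ofReal (1 + ε)) P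
    + ENNReal.ofReal (1 / (1 + γ))

variable {c ε γ : ℝ}

theorem eLpNorm_two_mul_inv_rpow (hε : 0 ≤ ε) {Z : Ω → ℝ} (hZ : ∀ᵐ ω ∂P, 0 < Z ω) :
    eLpNorm (fun ω => 2 * (Z ω ^ (1 + γ))⁻¹) (ENNReal.ofReal (1 + ε)) P =
      (∫⁻ ω, ((2 : ℝ≥0∞) * ((ENNReal.ofReal (Z ω)) ^ (1 + γ))⁻¹) ^ (1 + ε) ∂P)
        ^ (1 / (1 + ε)) := by
  have hp : 0 < 1 + ε := by linarith
  rw [eLpNorm_eq_lintegral_rpow_enorm_toReal (ENNReal.ofReal_pos.2 hp).ne' ENNReal.ofReal_ne_top,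
    ENNReal.toReal_ofReal hp.le]
  congr 1
  refine lintegral_congr_ae ?_
  filter_upwards [hZ] with ω hω
  rw [ENNReal.ofReal_rpow_of_pos hω, ← ENNReal.ofReal_inv_of_pos (by positivity),
    ← ENNReal.ofReal_ofNat, ← ENNReal.ofReal_mul zero_le_two, Real.enorm_of_nonneg (by positivity)]

theorem eLpNorm_besselWeight_le [IsProbabilityMeasure P] (hε : 0 ≤ ε) (hγ : 0 ≤ γ) {Z : Ω → ℝ}
    (hZm : AEMeasurable Z P) (hZ : ∀ᵐ ω ∂P, 0 < Z ω) :
    eLpNorm (fun ω => besselWeight c γ (Z ω)) (ENNReal.ofReal (1 + ε)) P ≤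
      besselMoment P c ε γ Z := by
  have hp : 1 ≤ ENNReal.ofReal (1 + ε) := ENNReal.one_le_ofReal.2 (by linarith)
  have hrpow (r : ℝ) : AEStronglyMeasurable (fun ω => Z ω ^ r) P :=
    (hZm.pow_const r).aestronglyMeasurable
  have hinv : AEStronglyMeasurable (fun ω => 2 * (Z ω ^ (1 + γ))⁻¹) P :=
    ((hZm.pow_const _).inv.const_mul 2).aestronglyMeasurable
  have hmul {a : ℝ} (ha : 0 ≤ a) (g : Ω → ℝ) :
      eLpNorm (fun ω => a * g ω) (ENNReal.ofReal (1 + ε)) P =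
        ENNReal.ofReal a * eLpNorm g (ENNReal.ofReal (1 + ε)) P := by
    rw [← Real.enorm_of_nonneg ha]
    exact eLpNorm_const_smul a g _ P
  have hconst : eLpNorm (fun _ : Ω => 1 / (1 + γ)) (ENNReal.ofReal (1 + ε)) P =
      ENNReal.ofReal (1 / (1 + γ)) := by
    rw [eLpNorm_const _ (one_pos.trans_le hp).ne' (NeZero.ne P), measure_univ, ENNReal.one_rpow,
      mul_one, Real.enorm_of_nonneg (by positivity)]
  calc eLpNorm (fun ω => besselWeight c γ (Z ω)) (ENNReal.ofReal (1 + ε)) P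
      ≤ eLpNorm (fun ω => 2 * (Z ω ^ (1 + γ))⁻¹) (ENNReal.ofReal (1 + ε)) P
        + eLpNorm (fun ω => γ / (1 + γ) * Z ω ^ (1 / γ - γ)) (ENNReal.ofReal (1 + ε)) P
        + eLpNorm (fun ω => 2 * Z ω ^ (c + 1 - γ)) (ENNReal.ofReal (1 + ε)) P
        + eLpNorm (fun _ : Ω => 1 / (1 + γ)) (ENNReal.ofReal (1 + ε)) P := by
        have h₁ := (hrpow (1 / γ - γ)).const_mul (γ / (1 + γ))
        have h₂ := (hrpow (c + 1 - γ)).const_mul 2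
        refine (eLpNorm_add_le ((hinv.add h₁).add h₂) aestronglyMeasurable_const hp).trans ?_
        gcongr
        refine (eLpNorm_add_le (hinv.add h₁) h₂ hp).trans ?_
        gcongr
        exact eLpNorm_add_le hinv h₁ hp
    _ = besselMoment P c ε γ Z := by
        rw [eLpNorm_two_mul_inv_rpow hε hZ, hmul (by positivity), hmul zero_le_two, hconst,
          ENNReal.ofReal_ofNat, besselMoment]

theorem lintegral_enorm_rpow_mul_le (hε : 0 < ε) (hγ : 0 < γ) {Z V : Ω → ℝ}
    (hZ : AEStronglyMeasurable Z P) (hV : AEStronglyMeasurable V P) :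
    ∫⁻ ω, ‖|Z ω| ^ γ * V ω‖ₑ ∂P ≤
      eLpNorm Z (ENNReal.ofReal (γ * (1 + 1 / ε))) P ^ γ *
        eLpNorm V (ENNReal.ofReal (1 + ε)) P := by
  have hconj : (1 + 1 / ε).HolderConjugate (1 + ε) :=
    Real.holderConjugate_iff.2 ⟨by simpa using hε, by field_simp; ring⟩
  have := hconj.ennrealOfReal
  have hZγ : AEStronglyMeasurable (fun ω => ‖Z ω‖ ^ γ) P :=
    (hZ.norm.aemeasurable.pow_const γ).aestronglyMeasurable
  calc ∫⁻ ω, ‖|Z ω| ^ γ * V ω‖ₑ ∂P = eLpNorm ((fun ω => ‖Z ω‖ ^ γ) • V) 1 P :=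
        eLpNorm_one_eq_lintegral_enorm.symm
    _ ≤ eLpNorm (fun ω => ‖Z ω‖ ^ γ) (ENNReal.ofReal (1 + 1 / ε)) P *
          eLpNorm V (ENNReal.ofReal (1 + ε)) P := eLpNorm_smul_le_mul_eLpNorm hV hZγ
    _ = _ := by
        rw [eLpNorm_norm_rpow Z hγ, ← ENNReal.ofReal_mul (by positivity), mul_comm γ]

theorem lintegral_enorm_sub_le_besselMoment [IsProbabilityMeasure P] (hc : 0 ≤ c) (hε : 0 < ε)
    (hγ : 0 < γ) (hγ1 : γ ≤ 1) {f : ℝ → ℝ}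
    (hf : ∀ x y : ℝ, 0 < x → 0 < y →
      |f x - f y| ≤ c * |x - y| * (1 / x + 1 / y + 1 / (x * y) + x ^ c + y ^ c))
    {x y : Ω → ℝ} (hx : AEMeasurable x P) (hy : AEMeasurable y P) (hxpos : ∀ᵐ ω ∂P, 0 < x ω)
    (hypos : ∀ᵐ ω ∂P, 0 < y ω) :
    ∫⁻ ω, ‖f (x ω) - f (y ω)‖ₑ ∂P ≤ ENNReal.ofReal c *
      (eLpNorm (fun ω => x ω - y ω) (ENNReal.ofReal (γ * (1 + 1 / ε))) P ^ γ *
        (besselMoment P c ε γ x + besselMoment P c ε γ y)) := by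
  have hw {z : Ω → ℝ} (hz : AEMeasurable z P) :
      AEStronglyMeasurable (fun ω => besselWeight c γ (z ω)) P :=
    (measurable_besselWeight.comp_aemeasurable hz).aestronglyMeasurable
  have hpt : ∀ᵐ ω ∂P, ‖f (x ω) - f (y ω)‖ₑ ≤ ENNReal.ofReal c *
      ‖|x ω - y ω| ^ γ * (besselWeight c γ (x ω) + besselWeight c γ (y ω))‖ₑ := by
    filter_upwards [hxpos, hypos] with ω hxω hyω
    have hnonneg : 0 ≤ |x ω - y ω| ^ γ * (besselWeight c γ (x ω) + besselWeight c γ (y ω)) :=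
      mul_nonneg (by positivity)
        (add_nonneg (besselWeight_nonneg hγ.le hxω.le) (besselWeight_nonneg hγ.le hyω.le))
    rw [Real.enorm_of_nonneg hnonneg, ← ENNReal.ofReal_mul hc, Real.enorm_eq_ofReal_abs]
    refine ENNReal.ofReal_le_ofReal ((hf _ _ hxω hyω).trans ?_)
    rw [mul_assoc]
    exact mul_le_mul_of_nonneg_left (abs_sub_mul_le_besselWeight_add hc hγ hγ1 hxω hyω) hc
  refine (lintegral_mono_ae hpt).trans ?_
  rw [lintegral_const_mul' _ _ ENNReal.ofReal_ne_top]
  gcongr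
  refine (lintegral_enorm_rpow_mul_le (Z := fun ω => x ω - y ω) hε hγ
    (hx.sub hy).aestronglyMeasurable ((hw hx).add (hw hy))).trans ?_
  gcongr
  exact (eLpNorm_add_le (hw hx) (hw hy) (ENNReal.one_le_ofReal.2 (by linarith))).trans
    (add_le_add (eLpNorm_besselWeight_le hε.le hγ.le hx hxpos)
      (eLpNorm_besselWeight_le hε.le hγ.le hy hypos))

end Moments

/-! ### The strong error bound -/

theorem intervalIntegrable_comp_of_abs {f x : ℝ → ℝ} {a b : ℝ} (hf : Measurable f)
    (hx : ContinuousOn x (uIcc a b))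
    (hfx : IntervalIntegrable (fun s => |f (x s)|) volume a b) :
    IntervalIntegrable (fun s => f (x s)) volume a b := by
  have hxm : AEMeasurable x (volume.restrict (uIoc a b)) :=
    (hx.mono uIoc_subset_uIcc).aemeasurable measurableSet_uIoc
  exact (IntervalIntegrable.intervalIntegrable_norm_iff
    (hf.comp_aemeasurable hxm).aestronglyMeasurable).1 hfx

theorem aemeasurable_process_comp_prod {Ω α E : Type*} {mΩ : MeasurableSpace Ω}
    [MeasurableSpace α] [TopologicalSpace E] [TopologicalSpace.PseudoMetrizableSpace E]
    [MeasurableSpace E] [BorelSpace E] {P : Measure Ω} {ν : Measure α} [SFinite P] {a b : ℝ}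
    {X : ℝ → Ω → E} (hab : a ≤ b) (hXm : ∀ s ∈ Icc a b, Measurable (X s))
    (hXc : ∀ ω, ContinuousOn (fun s => X s ω) (Icc a b)) {τ : α → ℝ} (hτ : AEMeasurable τ ν)
    (hτmem : ∀ᵐ s ∂ν, τ s ∈ Icc a b) :
    AEMeasurable (fun p : α × Ω => X (τ p.1) p.2) (ν.prod P) := by
  have hjoint : Measurable (Function.uncurry fun s ω => X (projIcc a b hab s) ω) :=
    measurable_uncurry_of_continuous_of_measurable
      (fun ω => (hXc ω).domRestrict.comp continuous_projIcc)
      fun s => hXm _ (projIcc a b hab s).2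
  have hτfst : AEMeasurable (fun p : α × Ω => τ p.1) (ν.prod P) :=
    hτ.comp_quasiMeasurePreserving Measure.quasiMeasurePreserving_fst
  refine (hjoint.comp_aemeasurable (hτfst.prodMk measurable_snd.aemeasurable)).congr ?_
  filter_upwards [Measure.quasiMeasurePreserving_fst.ae hτmem] with p hp
  simp only [Function.comp_apply, Function.uncurry_apply_pair, projIcc_of_mem hab hp]

section ErrorBound

variable {Ω : Type*} {mΩ : MeasurableSpace Ω} {P : Measure Ω} {n : ℕ} {t : ℕ → ℝ} {T : ℝ}
  {f : ℝ → ℝ} {X : ℝ → Ω → ℝ}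

theorem IsGrid.aemeasurable_enorm_sub_gridCeil [SFinite P] (ht : IsGrid n t T) (hf : Measurable f)
    (hXm : ∀ s ∈ Icc 0 T, Measurable (X s))
    (hXcont : ∀ ω, ContinuousOn (fun s => X s ω) (Icc 0 T)) :
    AEMeasurable (fun p : ℝ × Ω => ‖f (X p.1 p.2) - f (X (gridCeil n t p.1) p.2)‖ₑ)
      ((volume.restrict (Ioc 0 T)).prod P) := by
  have hmem : ∀ᵐ s ∂volume.restrict (Ioc 0 T), s ∈ Ioc 0 T := ae_restrict_mem measurableSet_Ioc
  have hceil : AEMeasurable (gridCeil n t) (volume.restrict (Ioc 0 T)) :=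
    aemeasurable_restrict_of_monotoneOn measurableSet_Ioc
      (ht.monotoneOn_gridCeil.mono Ioc_subset_Iic_self)
  have hX := aemeasurable_process_comp_prod (P := P) ht.nonneg hXm hXcont aemeasurable_id
    (hmem.mono fun s hs => Ioc_subset_Icc_self hs)
  have hXceil := aemeasurable_process_comp_prod (P := P) ht.nonneg hXm hXcont hceil
    (hmem.mono fun s hs => ht.gridCeil_mem_Icc hs.2)
  exact ((hf.comp_aemeasurable hX).sub (hf.comp_aemeasurable hXceil)).enorm

theorem IsGrid.lintegral_enorm_sub_gridCeil_le [IsProbabilityMeasure P] (ht : IsGrid n t T)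
    {c ε γ : ℝ} (hc : 0 ≤ c) (hε : 0 < ε) (hγ : 0 < γ) (hγ1 : γ ≤ 1)
    (hf : ∀ x y : ℝ, 0 < x → 0 < y →
      |f x - f y| ≤ c * |x - y| * (1 / x + 1 / y + 1 / (x * y) + x ^ c + y ^ c))
    (hXm : ∀ s ∈ Icc 0 T, Measurable (X s))
    (hXcont : ∀ ω, ContinuousOn (fun s => X s ω) (Icc 0 T))
    (hXpos : ∀ s ∈ Icc 0 T, ∀ᵐ ω ∂P, 0 < X s ω) {s : ℝ} (hs : s ∈ Icc 0 T) :
    ∫⁻ ω, ‖f (X s ω) - f (X (gridCeil n t s) ω)‖ₑ ∂P ≤ ENNReal.ofReal c *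
      (eLpNorm (fun ω => gridOscillation n t T fun s => X s ω)
        (ENNReal.ofReal (γ * (1 + 1 / ε))) P ^ γ *
        (2 * ⨆ u ∈ Icc 0 T, besselMoment P c ε γ (X u))) := by
  have hs' := ht.gridCeil_mem_Icc hs.2
  refine (lintegral_enorm_sub_le_besselMoment hc hε hγ hγ1 hf (hXm s hs).aemeasurable
    (hXm _ hs').aemeasurable (hXpos s hs) (hXpos _ hs')).trans ?_
  rw [two_mul]
  gcongr
  · exact eLpNorm_mono_real fun ω => ht.abs_sub_gridCeil_le_gridOscillation (hXcont ω) hs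
  · exact le_iSup₂ (f := fun u (_ : u ∈ Icc 0 T) => besselMoment P c ε γ (X u)) s hs
  · exact le_iSup₂ (f := fun u (_ : u ∈ Icc 0 T) => besselMoment P c ε γ (X u)) _ hs'

theorem IsGrid.lintegral_setLIntegral_enorm_sub_gridCeil_le [IsProbabilityMeasure P]
    (ht : IsGrid n t T) {c ε γ : ℝ} (hc : 0 ≤ c) (hε : 0 < ε) (hγ : 0 < γ) (hγ1 : γ ≤ 1)
    (hfm : Measurable f)
    (hf : ∀ x y : ℝ, 0 < x → 0 < y →
      |f x - f y| ≤ c * |x - y| * (1 / x + 1 / y + 1 / (x * y) + x ^ c + y ^ c))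
    (hXm : ∀ s ∈ Icc 0 T, Measurable (X s))
    (hXcont : ∀ ω, ContinuousOn (fun s => X s ω) (Icc 0 T))
    (hXpos : ∀ s ∈ Icc 0 T, ∀ᵐ ω ∂P, 0 < X s ω) :
    ∫⁻ ω, (∫⁻ s in Ioc 0 T, ‖f (X s ω) - f (X (gridCeil n t s) ω)‖ₑ) ∂P ≤ ENNReal.ofReal c *
      (eLpNorm (fun ω => gridOscillation n t T fun s => X s ω)
        (ENNReal.ofReal (γ * (1 + 1 / ε))) P ^ γ *
        (2 * ⨆ u ∈ Icc 0 T, besselMoment P c ε γ (X u))) * ENNReal.ofReal T := by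
  rw [← lintegral_lintegral_swap
    (f := fun s ω => ‖f (X s ω) - f (X (gridCeil n t s) ω)‖ₑ)
    (ht.aemeasurable_enorm_sub_gridCeil hfm hXm hXcont)]
  refine (setLIntegral_mono' measurableSet_Ioc fun s hs =>
    ht.lintegral_enorm_sub_gridCeil_le hc hε hγ hγ1 hf hXm hXcont hXpos
      (Ioc_subset_Icc_self hs)).trans_eq ?_
  rw [setLIntegral_const, Real.volume_Ioc, sub_zero]

theorem IsGrid.ae_iSup_abs_sub_le_of_driftImplicitEuler (ht : IsGrid n t T) {L : ℝ} (hL : 0 ≤ L)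
    (hmesh : gridMesh n t * L < 1) {s : Set ℝ} (hf : OneSidedLipschitzOnWith L f s)
    {W : ℝ → Ω → ℝ} {Y : ℕ → Ω → ℝ}
    (hXint : ∀ᵐ ω ∂P, IntervalIntegrable (fun s => f (X s ω)) volume 0 T)
    (hSDE : ∀ u ∈ Icc 0 T, ∀ᵐ ω ∂P, X u ω = X 0 ω + (∫ s in (0)..u, f (X s ω)) + W u ω)
    (hX : ∀ u ∈ Icc 0 T, ∀ᵐ ω ∂P, X u ω ∈ s) (hY : ∀ k ≤ n, ∀ᵐ ω ∂P, Y k ω ∈ s)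
    (hY0 : ∀ ω, Y 0 ω = X 0 ω)
    (hYrec : ∀ k < n, ∀ᵐ ω ∂P, Y (k + 1) ω =
      Y k ω + f (Y (k + 1) ω) * (t (k + 1) - t k) + (W (t (k + 1)) ω - W (t k) ω)) :
    ∀ᵐ ω ∂P, (⨆ k : Fin (n + 1), |X (t k.1) ω - Y k.1 ω|) ≤
      (1 / (1 - gridMesh n t * L)) ^ n *
        ∫ s in (0)..T, |f (X s ω) - f (X (gridCeil n t s) ω)| := by
  have hSDE' : ∀ᵐ ω ∂P, ∀ k ≤ n,
      X (t k) ω = X 0 ω + (∫ s in (0)..t k, f (X s ω)) + W (t k) ω :=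
    (ae_ball_iff (to_countable (Iic n))).2 fun k hk => hSDE _ (ht.mem_Icc hk)
  have hX' : ∀ᵐ ω ∂P, ∀ k ≤ n, X (t k) ω ∈ s :=
    (ae_ball_iff (to_countable (Iic n))).2 fun k hk => hX _ (ht.mem_Icc hk)
  have hY' : ∀ᵐ ω ∂P, ∀ k ≤ n, Y k ω ∈ s := (ae_ball_iff (to_countable (Iic n))).2 hY
  have hYrec' : ∀ᵐ ω ∂P, ∀ k < n, Y (k + 1) ω =
      Y k ω + f (Y (k + 1) ω) * (t (k + 1) - t k) + (W (t (k + 1)) ω - W (t k) ω) :=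
    (ae_ball_iff (to_countable (Iio n))).2 hYrec
  filter_upwards [hXint, hSDE', hX', hY', hYrec'] with ω hint hSDEω hXω hYω hYrecω
  refine ciSup_le fun k => ht.abs_sub_le_of_driftImplicitEuler hL hmesh hf hint hXω hYω (hY0 ω)
    (fun j hj => ?_) hYrecω (Nat.lt_succ_iff.1 k.2)
  have hint_to {i : ℕ} (hi : i ≤ n) : IntervalIntegrable (fun s => f (X s ω)) volume 0 (t i) :=
    hint.mono_set (uIcc_subset_uIcc_left (uIcc_of_le ht.nonneg ▸ ht.mem_Icc hi))
  rw [← intervalIntegral.integral_interval_sub_left (hint_to hj) (hint_to hj.le)]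
  linear_combination hSDEω (j + 1) hj - hSDEω j hj.le

theorem lintegral_enorm_le_of_ae_abs_le_intervalIntegral {a C : ℝ} (ha : 0 ≤ a) (hC : 0 ≤ C)
    {Z : Ω → ℝ} {g : ℝ → Ω → ℝ} (hZ : ∀ᵐ ω ∂P, |Z ω| ≤ C * ∫ s in (0)..a, |g s ω|) :
    ∫⁻ ω, ‖Z ω‖ₑ ∂P ≤ ENNReal.ofReal C * ∫⁻ ω, (∫⁻ s in Ioc 0 a, ‖g s ω‖ₑ) ∂P := by
  rw [← lintegral_const_mul' _ _ ENNReal.ofReal_ne_top]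
  refine lintegral_mono_ae (hZ.mono fun ω hω => ?_)
  calc ‖Z ω‖ₑ ≤ ENNReal.ofReal C * ‖∫ s in Ioc 0 a, |g s ω|‖ₑ := by
        rw [← Real.enorm_of_nonneg hC, ← enorm_mul, Real.enorm_eq_ofReal_abs,
          ← intervalIntegral.integral_of_le ha]
        exact (ENNReal.ofReal_le_ofReal hω).trans (Real.ofReal_le_enorm _)
    _ ≤ ENNReal.ofReal C * ∫⁻ s in Ioc 0 a, ‖g s ω‖ₑ := by
        gcongr
        exact (enorm_integral_le_lintegral_enorm _).trans_eq (by simp only [Real.enorm_abs])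

theorem strong_L1_error_bound_for_drift_implicit_Euler_Bessel_type_general
    [IsProbabilityMeasure P] (ht : IsGrid n t T) {ℱ : Filtration ℝ mΩ} {L c ε γ : ℝ} (hL : 0 ≤ L)
    (hmesh : gridMesh n t * L < 1) (hc : 0 ≤ c) (hε : 0 < ε) (hγ : 0 < γ) (hγ1 : γ ≤ 1)
    (hfm : Measurable f) (hfosl : OneSidedLipschitzOnWith L f (Ioi 0))
    (hflip : ∀ x y : ℝ, 0 < x → 0 < y →
      |f x - f y| ≤ c * |x - y| * (1 / x + 1 / y + 1 / (x * y) + x ^ c + y ^ c))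
    {W : ℝ → Ω → ℝ} (hWadapt : ∀ s ∈ Icc 0 T, Measurable[ℱ s] (W s))
    (hWindep : ∀ s u, 0 ≤ s → s ≤ u → u ≤ T →
      Indep (MeasurableSpace.comap (fun ω => W u ω - W s ω) inferInstance) (ℱ s) P)
    (hWnull : ∀ s u, 0 ≤ s → s < u → u ≤ T →
      NullSingletonClass (P.map fun ω => W u ω - W s ω))
    (hX0 : Measurable[ℱ 0] (X 0)) (hXm : ∀ s ∈ Icc 0 T, Measurable (X s))
    (hXcont : ∀ ω, ContinuousOn (fun s => X s ω) (Icc 0 T))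
    (hXpos : ∀ s ∈ Icc 0 T, ∀ᵐ ω ∂P, 0 < X s ω)
    (hXint : ∀ᵐ ω ∂P, IntervalIntegrable (fun s => f (X s ω)) volume 0 T)
    (hSDE : ∀ u ∈ Icc 0 T, ∀ᵐ ω ∂P, X u ω = X 0 ω + (∫ s in (0)..u, f (X s ω)) + W u ω)
    {Y : ℕ → Ω → ℝ} (hYnonneg : ∀ k ≤ n, ∀ ω, 0 ≤ Y k ω) (hY0 : ∀ ω, Y 0 ω = X 0 ω)
    (hYrec : ∀ k < n, ∀ᵐ ω ∂P, Y (k + 1) ω =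
      Y k ω + f (Y (k + 1) ω) * (t (k + 1) - t k) + (W (t (k + 1)) ω - W (t k) ω)) :
    eLpNorm (fun ω => ⨆ k : Fin (n + 1), |X (t k.1) ω - Y k.1 ω|) 1 P ≤
      ENNReal.ofReal (2 * T * c * (1 / (1 - gridMesh n t * L)) ^ n) *
        eLpNorm (fun ω => gridOscillation n t T fun s => X s ω)
          (ENNReal.ofReal (γ * (1 + 1 / ε))) P ^ γ *
        ⨆ u ∈ Icc 0 T, besselMoment P c ε γ (X u) := by
  have hYpos (k : ℕ) (hk : k ≤ n) : ∀ᵐ ω ∂P, 0 < Y k ω :=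
    ht.ae_pos_of_driftImplicitEuler hL hmesh hfosl hfm hWadapt hWindep hWnull
      (funext hY0 ▸ hX0) ((hXpos 0 ⟨le_rfl, ht.nonneg⟩).mono fun ω hω => hY0 ω ▸ hω) hYnonneg
      hYrec hk
  have hfactor : 0 ≤ (1 / (1 - gridMesh n t * L)) ^ n :=
    pow_nonneg (one_div_nonneg.2 (sub_nonneg.2 hmesh.le)) n
  have hpath := ht.ae_iSup_abs_sub_le_of_driftImplicitEuler hL hmesh hfosl hXint hSDE hXpos hYpos
    hY0 hYrec
  have hpath_abs := hpath.mono fun ω hω =>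
    (abs_of_nonneg (Real.iSup_nonneg fun _ => abs_nonneg _)).trans_le hω
  rw [eLpNorm_one_eq_lintegral_enorm]
  refine (lintegral_enorm_le_of_ae_abs_le_intervalIntegral ht.nonneg hfactor hpath_abs).trans
    ((mul_le_mul_right (ht.lintegral_setLIntegral_enorm_sub_gridCeil_le hc hε hγ hγ1 hfm hflip hXm
      hXcont hXpos) _).trans_eq ?_)
  rw [ENNReal.ofReal_mul (mul_nonneg (mul_nonneg zero_le_two ht.nonneg) hc),
    ENNReal.ofReal_mul (mul_nonneg zero_le_two ht.nonneg), ENNReal.ofReal_mul zero_le_two,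
    ENNReal.ofReal_ofNat]
  ring

end ErrorBound

theorem strong_L1_error_bound_for_drift_implicit_Euler_Bessel_type
    {Ω : Type*} [MeasurableSpace Ω] (P : Measure Ω) [IsProbabilityMeasure P]
    (T : ℝ) (hT : 0 ≤ T)
    (F : ℝ → MeasurableSpace Ω)
    (hF_mono : ∀ s t : ℝ, s ≤ t → F s ≤ F t)
    (hF_le : ∀ t : ℝ, F t ≤ (inferInstance : MeasurableSpace Ω))
    (μ : ℝ → ℝ) (hμmeas : Measurable μ)
    (W X : ℝ → Ω → ℝ)
    (hW0 : ∀ ω, W 0 ω = 0)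
    (hWadapt : ∀ t ∈ Set.Icc (0:ℝ) T, @Measurable Ω ℝ (F t) _ (W t))
    (hWcont : ∀ ω, ContinuousOn (fun t => W t ω) (Set.Icc 0 T))
    (hWlaw : ∀ s t : ℝ, 0 ≤ s → s ≤ t → t ≤ T →
      Measure.map (fun ω => W t ω - W s ω) P = gaussianReal 0 (Real.toNNReal (t - s)))
    (hWindep : ∀ s t : ℝ, 0 ≤ s → s ≤ t → t ≤ T →
      Indep (MeasurableSpace.comap (fun ω => W t ω - W s ω) inferInstance) (F s) P)
    (hXnonneg : ∀ t ω, 0 ≤ X t ω)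
    (hXadapt : ∀ t ∈ Set.Icc (0:ℝ) T, @Measurable Ω ℝ (F t) _ (X t))
    (hXcont : ∀ ω, ContinuousOn (fun t => X t ω) (Set.Icc 0 T))
    (hXint : ∀ᵐ ω ∂P, IntervalIntegrable (fun s => |μ (X s ω)|) volume 0 T)
    (hSDE : ∀ t ∈ Set.Icc (0:ℝ) T, ∀ᵐ ω ∂P,
      X t ω = X 0 ω + (∫ s in (0:ℝ)..t, μ (X s ω)) + W t ω)
    (L c ε γ : ℝ) (hL : 0 ≤ L) (hc : 0 ≤ c) (hε : 0 < ε) (hγ1 : 0 < γ) (hγ2 : γ ≤ 1)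
    (n : ℕ) (t : ℕ → ℝ)
    (ht0 : t 0 = 0) (htn : t n = T) (htmono : ∀ i < n, t i < t (i + 1))
    (htmem : ∀ i ≤ n, t i ∈ Set.Icc (0:ℝ) T)
    (hmesh : L * gridMesh n t < 1)
    (hμosl : ∀ x y : ℝ, 0 < x → 0 < y → (x - y) * (μ x - μ y) ≤ L * (x - y) ^ 2)
    (hμlip : ∀ x y : ℝ, 0 < x → 0 < y →
      |μ x - μ y| ≤ c * |x - y| * (1 / x + 1 / y + 1 / (x * y) + x ^ c + y ^ c))
    (hXzero : ∀ s ∈ Set.Icc (0:ℝ) T, P {ω | X s ω = 0} = 0)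
    (Y : ℕ → Ω → ℝ)
    (hYmeas : ∀ k ≤ n, Measurable (Y k))
    (hYnonneg : ∀ k ≤ n, ∀ ω, 0 ≤ Y k ω)
    (hY0 : ∀ ω, Y 0 ω = X 0 ω)
    (hYrec : ∀ k < n, ∀ᵐ ω ∂P,
      Y (k + 1) ω = Y k ω + μ (Y (k + 1) ω) * (t (k + 1) - t k)
        + (W (t (k + 1)) ω - W (t k) ω)) :
    eLpNorm (fun ω => ⨆ k : Fin (n + 1), |X (t k.1) ω - Y k.1 ω|) 1 P
      ≤ ENNReal.ofReal (2 * T * c * (1 / (1 - gridMesh n t * L)) ^ n)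
        * (eLpNorm (fun ω => ⨆ u : Set.Icc (0:ℝ) T, |X u.1 ω - X (gridCeil n t u.1) ω|)
            (ENNReal.ofReal (γ * (1 + 1 / ε))) P) ^ γ
        * ⨆ u ∈ Set.Icc (0:ℝ) T,
            ((∫⁻ ω, ((2 : ℝ≥0∞) * ((ENNReal.ofReal (X u ω)) ^ (1 + γ))⁻¹) ^ (1 + ε) ∂P)
                  ^ (1 / (1 + ε))
              + ENNReal.ofReal (γ / (1 + γ)) *
                  eLpNorm (fun ω => (X u ω) ^ (1 / γ - γ)) (ENNReal.ofReal (1 + ε)) P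
              + 2 * eLpNorm (fun ω => (X u ω) ^ (c + 1 - γ)) (ENNReal.ofReal (1 + ε)) P
              + ENNReal.ofReal (1 / (1 + γ))) := by
  have hgrid : IsGrid n t T := ⟨ht0, htn, htmono⟩
  have hXpos : ∀ s ∈ Icc 0 T, ∀ᵐ ω ∂P, 0 < X s ω := fun s hs =>
    (measure_eq_zero_iff_ae_notMem.1 (hXzero s hs)).mono fun ω hω =>
      (hXnonneg s ω).lt_of_ne (Ne.symm hω)
  have hWnull : ∀ s u, 0 ≤ s → s < u → u ≤ T →
      NullSingletonClass (P.map fun ω => W u ω - W s ω) := fun s u hs hsu hu =>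
    hWlaw s u hs hsu.le hu ▸ nullSingletonClass_gaussianReal (by simpa using hsu)
  exact strong_L1_error_bound_for_drift_implicit_Euler_Bessel_type_general
    (ℱ := ⟨F, hF_mono, hF_le⟩) hgrid hL (by rwa [mul_comm]) hc hε hγ1 hγ2 hμmeas
    (fun x hx y hy => hμosl x y hx hy) hμlip hWadapt hWindep hWnull
    (hXadapt 0 ⟨le_rfl, hT⟩) (fun s hs => (hXadapt s hs).mono (hF_le s) le_rfl) hXcont hXpos
    (hXint.mono fun ω hω =>
      intervalIntegrable_comp_of_abs hμmeas (by simpa only [uIcc_of_le hT] using hXcont ω) hω)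
    hSDE hYnonneg hY0 hYrec

end
end

section
/- Let α ∈ (0,∞), μ ∈ C¹([0,∞), ℝ), σ ∈ C([0,∞), [0,∞)) satisfy σ(0) = 0, σ(x) > 0 for all x ∈ (0,∞), σ·σ ∈ C²([0,∞), [0,∞)), (σ·σ)'(0) > 0 and α = 2μ(0)/((σ·σ)'(0)) − 1/2. Define φ : [0,∞) → [0,∞) by φ(y) := ∫_0^y 1/σ(z) dz, let g : (0,∞) → ℝ be given by g(x) := (μ(y) − ¼(σ·σ)'(y))/σ(y) with y = φ^{−1}(x), and set L := max{ sup_{z∈(0,∞)} g'(z), 0 } ∈ [0,∞]. Assume there exists ρ ∈ [1,∞) such that limsup_{x→∞} [ max{μ(x),0}/x + σ(x)/x + |μ(x)|/x^ρ + max{g'(x),0} + |g'(x)|/x^ρ ] < ∞. Then: φ is well-defined and a bijection of [0,∞) onto [0,∞); the restriction of φ^{−1} to (0,∞) is continuously differentiable; g is well-defined and continuously differentiable on (0,∞); L < ∞; for every t ∈ (0,∞) with tL < 1 the map (0,∞) ∋ x ↦ x − t·g(x) ∈ ℝ is a bijection onto ℝ; limsup_{x↓0} ( |μ(x)−μ(0)|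 + |(σ·σ)'(x)−(σ·σ)'(0)| )/σ(x) < ∞; and there exists c ∈ [0,∞) such that for all x, y ∈ (0,∞): (x−y)(g(x)−g(y)) ≤ L(x−y)², |g(x)−g(y)| ≤ c|x−y|(1 + 1/(xy) + x^c + y^c), and α − c(x + x^c) ≤ x·g(x) ≤ c(1+x²). -/
open MeasureTheory Filter Set
open scoped Topology ENNReal

noncomputable section

/-- The Lamperti transform `φ(y) = ∫_0^y 1/σ(z) dz`. -/
def besselPhi (σ : ℝ → ℝ) (y : ℝ) : ℝ := ∫ z in (0:ℝ)..y, (σ z)⁻¹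

/-- The inverse of the Lamperti transform `φ` on `[0,∞)`. -/
def besselInv (σ : ℝ → ℝ) : ℝ → ℝ := Function.invFunOn (besselPhi σ) (Set.Ici 0)

/-- The derivative `(σ·σ)'` (with one-sided derivative at the boundary point `0`). -/
def sqDeriv (σ : ℝ → ℝ) : ℝ → ℝ := derivWithin (fun x => σ x * σ x) (Set.Ici 0)

/-- The drift `g = ((μ - ¼(σ·σ)')/σ) ∘ φ⁻¹` of the transformed SDE. -/
def besselG (μ σ : ℝ → ℝ) (x : ℝ) : ℝ :=
  (μ (besselInv σ x) - (1 / 4) * sqDeriv σ (besselInv σ x)) / σ (besselInv σ x)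

/-- `L = [sup_{z ∈ (0,∞)} g'(z)]⁺ ∈ [0,∞]`, computed in the extended nonnegative reals. -/
def besselL (μ σ : ℝ → ℝ) : ℝ≥0∞ :=
  ⨆ z ∈ Set.Ioi (0:ℝ), ENNReal.ofReal (deriv (besselG μ σ) z)

/-!
Since `σ` is at least of order `√x` at `0` and at most of order `x` at infinity, `1/σ` is integrable
at `0` but not at infinity, which makes `φ` a bijection of `[0,∞)`.

Write `ψ = φ⁻¹` and `m = μ - ¼(σ·σ)'`, so that `g = (m ∘ ψ) / (σ ∘ ψ)`. Since `ψ' = σ ∘ ψ`, the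
chain rule gives `(σ ∘ ψ)' = ½(σ·σ)' ∘ ψ`, in which the square root singularity of `σ` at `0` has
disappeared. Hence `ψ(x) = O(x²)` and `σ(ψ(x)) = ½(σ·σ)'(0) x + O(x²)` as `x ↓ 0`, so that
`x g(x) = α + O(x)` and `g'(x) = O(x⁻²)`. Moreover
`g' = m' ∘ ψ - ½(m (σ·σ)') ∘ ψ / (σ ∘ ψ)²` is bounded above near `0`, because
`m(0) = ½α(σ·σ)'(0) > 0`. Near infinity `g'` is controlled by the growth assumption, and on compact
subintervals by continuity.
-/

open Asymptotics

section RealAnalysis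

theorem hasDerivAt_derivWithin_Ici {f : ℝ → ℝ} {a x : ℝ}
    (hf : DifferentiableOn ℝ f (Ici a)) (hx : a < x) :
    HasDerivAt f (derivWithin f (Ici a) x) x :=
  (hf x hx.le).hasDerivWithinAt.hasDerivAt (Ici_mem_nhds hx)

theorem contDiffOn_one_of_hasDerivAt {f f' : ℝ → ℝ} {s : Set ℝ} (hs : IsOpen s)
    (hf : ∀ x ∈ s, HasDerivAt f (f' x) x) (hf' : ContinuousOn f' s) : ContDiffOn ℝ 1 f s := by
  rw [show (1 : WithTop ℕ∞) = 0 + 1 by simp, contDiffOn_succ_iff_deriv_of_isOpen hs]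
  exact ⟨fun x hx ↦ (hf x hx).differentiableAt.differentiableWithinAt, by simp,
    contDiffOn_zero.2 (hf'.congr fun x hx ↦ (hf x hx).deriv)⟩

theorem isBigO_const_pow_succ_atTop (c : ℝ) (n : ℕ) :
    (fun _ ↦ c) =O[atTop] fun x : ℝ ↦ x ^ (n + 1) :=
  (isLittleO_const_left.2 <| Or.inr <|
    tendsto_norm_atTop_atTop.comp (tendsto_pow_atTop n.succ_ne_zero)).isBigO

theorem isBigO_sub_pow_succ_of_hasDerivAt {f f' : ℝ → ℝ} {a : ℝ} {n : ℕ}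
    (hf : ContinuousWithinAt f (Ici a) a) (hf' : ∀ᶠ x in 𝓝[>] a, HasDerivAt f (f' x) x)
    (hO : f' =O[𝓝[>] a] fun x ↦ (x - a) ^ n) :
    (fun x ↦ f x - f a) =O[𝓝[>] a] fun x ↦ (x - a) ^ (n + 1) := by
  obtain ⟨C, hC⟩ := hO.bound
  obtain ⟨b, hb, hab⟩ := mem_nhdsGT_iff_exists_Ioo_subset.1 (hf'.and hC)
  refine IsBigO.of_bound C ?_
  filter_upwards [Ioo_mem_nhdsGT hb] with x hx
  have hcont : ContinuousOn f (Icc a x) := fun y hy ↦ by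
    rcases hy.1.eq_or_lt with rfl | hay
    · exact hf.mono Icc_subset_Ici_self
    · exact (hab ⟨hay, hy.2.trans_lt hx.2⟩).1.continuousAt.continuousWithinAt
  obtain ⟨ξ, hξ, hslope⟩ := exists_hasDerivAt_eq_slope f f' hx.1 hcont
    fun y hy ↦ (hab ⟨hy.1, hy.2.trans hx.2⟩).1
  have hbound : ‖f' ξ‖ ≤ C * ‖(ξ - a) ^ n‖ := (hab ⟨hξ.1, hξ.2.trans hx.2⟩).2
  have hξa : 0 < ξ - a := sub_pos.2 hξ.1
  have hxa : 0 < x - a := sub_pos.2 hx.1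
  have hC0 : 0 ≤ C := nonneg_of_mul_nonneg_left ((norm_nonneg _).trans hbound)
    (norm_pos_iff.2 (pow_pos hξa n).ne')
  rw [Real.norm_of_nonneg (pow_pos hξa n).le] at hbound
  rw [eq_div_iff hxa.ne'] at hslope
  calc ‖f x - f a‖ = ‖f' ξ‖ * (x - a) := by rw [← hslope, norm_mul, Real.norm_of_nonneg hxa.le]
    _ ≤ C * (ξ - a) ^ n * (x - a) := by gcongr
    _ ≤ C * (x - a) ^ n * (x - a) := by gcongr; exact hξ.2.le
    _ = C * ‖(x - a) ^ (n + 1)‖ := by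
      rw [Real.norm_of_nonneg (pow_pos hxa _).le, pow_succ, mul_assoc]

theorem isBigO_pow_succ_atTop_of_deriv {g : ℝ → ℝ} {n : ℕ}
    (hg : ∀ᶠ x in atTop, DifferentiableAt ℝ g x)
    (htop : deriv g =O[atTop] fun x ↦ x ^ n) : g =O[atTop] fun x ↦ x ^ (n + 1) := by
  obtain ⟨C, hC0, hC⟩ := htop.exists_pos
  obtain ⟨a, ha⟩ := eventually_atTop.1 (hg.and (hC.bound.and (eventually_ge_atTop 1)))
  refine (IsBigO.add (IsBigO.of_bound C ?_)
    (isBigO_const_pow_succ_atTop (g a) n)).congr_left fun x ↦ sub_add_cancel (g x) (g a)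
  filter_upwards [eventually_ge_atTop a] with x hx
  have ha0 : 0 ≤ a := zero_le_one.trans (ha a le_rfl).2.2
  have hbound (z : ℝ) (hz : z ∈ Icc a x) : ‖deriv g z‖ ≤ C * x ^ n := by
    have hz0 := ha0.trans hz.1
    refine (ha z hz.1).2.1.trans ?_
    rw [Real.norm_of_nonneg (pow_nonneg hz0 n)]
    gcongr
    exact hz.2
  calc ‖g x - g a‖ ≤ C * x ^ n * ‖x - a‖ :=
        (convex_Icc a x).norm_image_sub_le_of_norm_deriv_le (fun z hz ↦ (ha z hz.1).1) hbound
          (left_mem_Icc.2 hx) (right_mem_Icc.2 hx)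
    _ ≤ C * x ^ n * x := by
      rw [Real.norm_of_nonneg (sub_nonneg.2 hx)]
      have := ha0.trans hx
      gcongr
      linarith
    _ = C * ‖x ^ (n + 1)‖ := by
      rw [Real.norm_of_nonneg (pow_nonneg (ha0.trans hx) _), pow_succ, mul_assoc]

theorem bddAbove_image_Ioi {h : ℝ → ℝ} {a : ℝ} (hh : ContinuousOn h (Ioi a))
    (ha : IsBoundedUnder (· ≤ ·) (𝓝[>] a) h) (htop : IsBoundedUnder (· ≤ ·) atTop h) :
    BddAbove (h '' Ioi a) := by
  obtain ⟨A, hA⟩ := ha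
  obtain ⟨B, hB⟩ := htop
  obtain ⟨b, hb, hA⟩ := mem_nhdsGT_iff_exists_Ioc_subset.1 hA
  obtain ⟨c, hB⟩ := eventually_atTop.1 hB
  obtain ⟨M, hM⟩ := (isCompact_Icc (a := b) (b := c)).bddAbove_image
    (hh.mono fun x hx ↦ lt_of_lt_of_le hb hx.1)
  refine ⟨max A (max B M), ?_⟩
  rintro _ ⟨x, hx, rfl⟩
  rcases le_or_gt x b with hxb | hxb
  · exact le_max_of_le_left (hA ⟨hx, hxb⟩)
  rcases le_or_gt c x with hcx | hcx
  · exact le_max_of_le_right (le_max_of_le_left (hB x hcx))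
  · exact le_max_of_le_right (le_max_of_le_right (hM ⟨x, ⟨hxb.le, hcx.le⟩, rfl⟩))

theorem exists_abs_le_mul_add_of_isBigO {h u v : ℝ → ℝ} {a : ℝ} (hh : ContinuousOn h (Ioi a))
    (hu : ContinuousOn u (Ioi a)) (hv : ContinuousOn v (Ioi a)) (hu0 : ∀ x > a, 0 < u x)
    (hv0 : ∀ x > a, 0 < v x) (ha : h =O[𝓝[>] a] u) (htop : h =O[atTop] v) :
    ∃ C, ∀ x > a, |h x| ≤ C * (u x + v x) := by
  have hpos (x : ℝ) (hx : a < x) : 0 < u x + v x := add_pos (hu0 x hx) (hv0 x hx)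
  have bounded {l : Filter ℝ} {w : ℝ → ℝ} (hl : ∀ᶠ x in l, a < x) (hO : h =O[l] w)
      (hw : ∀ x > a, |w x| ≤ u x + v x) :
      IsBoundedUnder (· ≤ ·) l fun x ↦ |h x| / (u x + v x) := by
    obtain ⟨C, hC⟩ := (hO.trans (hl.mono hw).isBigO).bound
    refine ⟨C, eventually_map.2 ?_⟩
    filter_upwards [hl, hC] with x hx hCx
    rwa [div_le_iff₀ (hpos x hx), ← Real.norm_eq_abs, ← Real.norm_of_nonneg (hpos x hx).le]
  obtain ⟨C, hC⟩ := bddAbove_image_Ioi (hh.abs.div (hu.add hv) fun x hx ↦ (hpos x hx).ne')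
    (bounded self_mem_nhdsWithin ha fun x hx ↦ by
      rw [abs_of_pos (hu0 x hx)]; exact le_add_of_nonneg_right (hv0 x hx).le)
    (bounded (eventually_gt_atTop a) htop fun x hx ↦ by
      rw [abs_of_pos (hv0 x hx)]; exact le_add_of_nonneg_left (hu0 x hx).le)
  exact ⟨C, fun x hx ↦ (div_le_iff₀ (hpos x hx)).1 (hC (mem_image_of_mem _ hx))⟩

theorem bijOn_Ioi_univ_of_strictMonoOn {h : ℝ → ℝ} {a : ℝ} (hmono : StrictMonoOn h (Ioi a))
    (hh : ContinuousOn h (Ioi a)) (ha : Tendsto h (𝓝[>] a) atBot) (htop : Tendsto h atTop atTop) :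
    BijOn h (Ioi a) univ :=
  ⟨mapsTo_univ _ _, hmono.injOn, hh.surjOn_of_tendsto nonempty_Ioi
    ((tendsto_comp_coe_Ioi_atBot).2 ha) (tendsto_comp_val_Ioi_atTop.2 htop)⟩

theorem bijOn_Ici_of_strictMonoOn {h : ℝ → ℝ} {a : ℝ} (hmono : StrictMonoOn h (Ici a))
    (hh : ContinuousOn h (Ici a)) (htop : Tendsto h atTop atTop) : BijOn h (Ici a) (Ici (h a)) :=
  ⟨fun _ hx ↦ hmono.monotoneOn self_mem_Ici hx hx, hmono.injOn,
    isPreconnected_Ici.intermediate_value_Ici self_mem_Ici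
      (le_principal_iff.2 (Ici_mem_atTop a)) hh htop⟩

theorem sub_mul_sub_le_of_deriv_le {g : ℝ → ℝ} {a L : ℝ} (hg : DifferentiableOn ℝ g (Ioi a))
    (hL : ∀ z > a, deriv g z ≤ L) {x y : ℝ} (hx : a < x) (hy : a < y) :
    (x - y) * (g x - g y) ≤ L * (x - y) ^ 2 := by
  wlog hxy : y ≤ x generalizing x y
  · linarith [this hy hx (le_of_not_ge hxy)]
  have hle := (convex_Ioi a).image_sub_le_mul_sub_of_deriv_le hg.continuousOn
    (by rwa [interior_Ioi]) (by rwa [interior_Ioi]) y hy x hx hxy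
  calc (x - y) * (g x - g y) ≤ (x - y) * (L * (x - y)) := by gcongr
    _ = L * (x - y) ^ 2 := by ring

theorem abs_sub_le_of_abs_deriv_le {g : ℝ → ℝ} {M : ℝ} {n : ℕ}
    (hg : DifferentiableOn ℝ g (Ioi 0))
    (hM : ∀ z > 0, |deriv g z| ≤ M * ((z ^ 2)⁻¹ + z ^ n)) {x y : ℝ} (hx : 0 < x) (hy : 0 < y) :
    |g x - g y| ≤ M * |x - y| * (1 / (x * y) + x ^ n + y ^ n) := by
  wlog hxy : x ≤ y generalizing x y
  · rw [abs_sub_comm, abs_sub_comm x, mul_comm x]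
    linarith [this hy hx (le_of_not_ge hxy)]
  have hM0 : 0 ≤ M := nonneg_of_mul_nonneg_left ((abs_nonneg _).trans (hM x hx)) (by positivity)
  have hpos {z : ℝ} (hz : z ∈ Ico x y) : 0 < z := hx.trans_le hz.1
  have hderiv (z : ℝ) (hz : 0 < z) : HasDerivAt (fun z ↦ g z - g x) (deriv g z) z :=
    ((hg.differentiableAt (Ioi_mem_nhds hz)).hasDerivAt).sub_const _
  -- On `[x, y]` the bound on the derivative is at most the derivative of `M (y ^ n z - 1 / z)`.
  have hmajorant (z : ℝ) (hz : 0 < z) : HasDerivAt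
      (fun z ↦ M * (y ^ n * (z - x) + (x⁻¹ - z⁻¹))) (M * (y ^ n + (z ^ 2)⁻¹)) z :=
    (((((hasDerivAt_id z).sub_const x).const_mul (y ^ n)).add
      ((hasDerivAt_inv hz.ne').const_sub x⁻¹)).const_mul M).congr_deriv (by ring)
  have hle := image_norm_le_of_norm_deriv_right_le_deriv_boundary'
    (fun z hz ↦ (hderiv z (hx.trans_le hz.1)).continuousAt.continuousWithinAt)
    (fun z hz ↦ (hderiv z (hpos hz)).hasDerivWithinAt) (by simp)
    (fun z hz ↦ (hmajorant z (hx.trans_le hz.1)).continuousAt.continuousWithinAt)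
    (fun z hz ↦ (hmajorant z (hpos hz)).hasDerivWithinAt)
    (fun z hz ↦ (hM z (hpos hz)).trans ?_) (right_mem_Icc.2 hxy)
  · rw [abs_sub_comm, abs_sub_comm x, abs_of_nonneg (sub_nonneg.2 hxy)]
    calc |g y - g x| ≤ M * (y ^ n * (y - x) + (x⁻¹ - y⁻¹)) := hle
      _ = M * (y - x) * (1 / (x * y) + y ^ n) := by field_simp; ring
      _ ≤ M * (y - x) * (1 / (x * y) + x ^ n + y ^ n) :=
        mul_le_mul_of_nonneg_left (by linarith [pow_pos hx n])
          (mul_nonneg hM0 (sub_nonneg.2 hxy))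
  · have hzy : z ^ n ≤ y ^ n := pow_le_pow_left₀ (hpos hz).le hz.2.le n
    exact mul_le_mul_of_nonneg_left (by linarith) hM0

theorem tendsto_atTop_atTop_of_hasDerivAt_inv {φ σ : ℝ → ℝ} (hσ : ∀ᶠ x in atTop, 0 < σ x)
    (hO : σ =O[atTop] (fun x ↦ x)) (hφ : ∀ᶠ x in atTop, HasDerivAt φ (σ x)⁻¹ x) :
    Tendsto φ atTop atTop := by
  obtain ⟨C, hC0, hC⟩ := hO.exists_pos
  obtain ⟨a, ha⟩ := eventually_atTop.1 (hσ.and (hC.bound.and (hφ.and (eventually_gt_atTop 0))))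
  have hderiv (x : ℝ) (hx : a ≤ x) :
      HasDerivAt (fun z ↦ φ z - C⁻¹ * Real.log z) ((σ x)⁻¹ - C⁻¹ * x⁻¹) x :=
    (ha x hx).2.2.1.sub ((Real.hasDerivAt_log (ha x hx).2.2.2.ne').const_mul _)
  have hmono : MonotoneOn (fun z ↦ φ z - C⁻¹ * Real.log z) (Ici a) := by
    refine monotoneOn_of_hasDerivWithinAt_nonneg (convex_Ici a)
      (fun x hx ↦ (hderiv x hx).continuousAt.continuousWithinAt)
      (fun x hx ↦ (hderiv x (interior_subset hx)).hasDerivWithinAt) fun x hx ↦ ?_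
    obtain ⟨hσx, hCx, -, hx0⟩ := ha x (interior_subset hx)
    rw [Real.norm_of_nonneg hσx.le, Real.norm_of_nonneg hx0.le] at hCx
    rw [← mul_inv, sub_nonneg]
    exact inv_anti₀ hσx hCx
  refine tendsto_atTop_mono' atTop ?_ (tendsto_atTop_add_const_left _ (φ a - C⁻¹ * Real.log a)
    (Real.tendsto_log_atTop.const_mul_atTop (inv_pos.2 hC0)))
  filter_upwards [eventually_ge_atTop a] with x hx
  linarith [hmono self_mem_Ici hx hx]

theorem isBigO_sub_of_derivWithin_ne_zero {f : ℝ → ℝ} {s : Set ℝ} {a : ℝ}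
    (hf : derivWithin f s a ≠ 0) : (fun x ↦ x - a) =O[𝓝[s] a] fun x ↦ f x - f a := by
  have hderiv := (differentiableWithinAt_of_derivWithin_ne_zero hf).hasDerivWithinAt
  have hO := (HasDerivAtFilter.isTheta_sub hderiv hf).isBigO_symm
  rw [prod_pure, isBigO_map] at hO
  exact hO

theorem rpow_le_rpow_add_rpow {x a b c : ℝ} (hx : 0 ≤ x) (ha : 0 ≤ a) (hab : a ≤ b) (hbc : b ≤ c) :
    x ^ b ≤ x ^ a + x ^ c := by
  rcases le_total x 1 with h | h
  · have := Real.rpow_le_rpow_of_exponent_ge' hx h ha hab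
    linarith [Real.rpow_nonneg hx c]
  · have := Real.rpow_le_rpow_of_exponent_le h hbc
    linarith [Real.rpow_nonneg hx a]

theorem continuousOn_of_monotoneOn_of_surjOn {g : ℝ → ℝ} {s t : Set ℝ} [OrdConnected s]
    [OrdConnected t] (hg : MonotoneOn g s) (hst : MapsTo g s t) (hsurj : SurjOn g s t) :
    ContinuousOn g s := by
  have hcont : Continuous (hst.restrict g s t) := Monotone.continuous_of_surjective
    (fun x y hxy ↦ hg x.2 y.2 hxy) (hst.restrict_surjective_iff.2 hsurj)
  exact continuousOn_iff_continuous_domRestrict.2 (continuous_subtype_val.comp hcont)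

theorem isBigO_rpow_of_abs_div_le {f : ℝ → ℝ} {ρ C : ℝ}
    (h : ∀ᶠ x in atTop, |f x| / x ^ ρ ≤ C) : f =O[atTop] fun x ↦ x ^ ρ := by
  refine IsBigO.of_bound C ?_
  filter_upwards [h, eventually_gt_atTop 0] with x hfx hx
  have hpos := Real.rpow_pos_of_pos hx ρ
  rwa [div_le_iff₀ hpos, ← Real.norm_eq_abs, ← Real.norm_of_nonneg hpos.le] at hfx

theorem isBigO_rpow_natCeil_atTop (ρ : ℝ) :
    (fun x : ℝ ↦ x ^ ρ) =O[atTop] fun x ↦ x ^ ⌈ρ⌉₊ := by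
  refine IsBigO.of_bound 1 ?_
  filter_upwards [eventually_ge_atTop 1] with x hx
  have hx0 := zero_le_one.trans hx
  rw [one_mul, Real.norm_of_nonneg (Real.rpow_nonneg hx0 ρ),
    Real.norm_of_nonneg (pow_nonneg hx0 _), ← Real.rpow_natCast]
  exact Real.rpow_le_rpow_of_exponent_le hx (Nat.le_ceil ρ)

theorem mul_toReal_lt_one {t : ℝ} {L : ℝ≥0∞} (ht : 0 ≤ t) (h : ENNReal.ofReal t * L < 1) :
    t * L.toReal < 1 := by
  have h' := (ENNReal.toReal_lt_toReal h.ne_top ENNReal.one_ne_top).2 h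
  rwa [ENNReal.toReal_mul, ENNReal.toReal_ofReal ht, ENNReal.toReal_one] at h'

end RealAnalysis

/-- Diffusion coefficients on `[0,∞)` which vanish at `0` like a square root and grow at most
linearly; the regularity is that of `σ·σ`. -/
structure SquareRootDiffusion (σ : ℝ → ℝ) : Prop where
  map_zero : σ 0 = 0
  pos : ∀ x, 0 < x → 0 < σ x
  contDiffOn_mul_self : ContDiffOn ℝ 2 (fun x ↦ σ x * σ x) (Ici 0)
  sqDeriv_zero_pos : 0 < sqDeriv σ 0
  isBigO_id : σ =O[atTop] fun x ↦ x

theorem besselPhi_zero (σ : ℝ → ℝ) : besselPhi σ 0 = 0 := intervalIntegral.integral_same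

namespace SquareRootDiffusion

variable {σ : ℝ → ℝ}

theorem nonneg (hσ : SquareRootDiffusion σ) {x : ℝ} (hx : 0 ≤ x) : 0 ≤ σ x := by
  rcases hx.eq_or_lt with rfl | hx
  exacts [hσ.map_zero.ge, (hσ.pos x hx).le]

theorem continuousOn (hσ : SquareRootDiffusion σ) : ContinuousOn σ (Ici 0) :=
  hσ.contDiffOn_mul_self.continuousOn.sqrt.congr fun _ hx ↦
    (Real.sqrt_mul_self (hσ.nonneg hx)).symm

theorem contDiffOn_sqDeriv (hσ : SquareRootDiffusion σ) : ContDiffOn ℝ 1 (sqDeriv σ) (Ici 0) :=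
  hσ.contDiffOn_mul_self.derivWithin (uniqueDiffOn_Ici 0) (by norm_num)

theorem hasDerivAt (hσ : SquareRootDiffusion σ) {x : ℝ} (hx : 0 < x) :
    HasDerivAt σ (sqDeriv σ x / (2 * σ x)) x := by
  have hsqrt := (hasDerivAt_derivWithin_Ici (hσ.contDiffOn_mul_self.differentiableOn two_ne_zero)
    hx).sqrt (mul_pos (hσ.pos x hx) (hσ.pos x hx)).ne'
  rw [Real.sqrt_mul_self (hσ.pos x hx).le] at hsqrt
  refine hsqrt.congr_of_eventuallyEq ?_
  filter_upwards [Ioi_mem_nhds hx] with y hy using (Real.sqrt_mul_self (hσ.pos y hy).le).symm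

theorem isBigO_mul_self (hσ : SquareRootDiffusion σ) :
    (fun x ↦ x) =O[𝓝[>] 0] fun x ↦ σ x * σ x := by
  simpa only [hσ.map_zero, mul_zero, sub_zero] using
    (isBigO_sub_of_derivWithin_ne_zero hσ.sqDeriv_zero_pos.ne').mono
      (nhdsWithin_mono 0 Ioi_subset_Ici_self)

theorem isBigO_self (hσ : SquareRootDiffusion σ) : (fun x ↦ x) =O[𝓝[>] 0] σ := by
  refine IsBigO.of_pow two_ne_zero ?_
  have hbdd : (fun x : ℝ ↦ x) =O[𝓝[>] 0] fun _ ↦ (1 : ℝ) :=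
    (tendsto_id.mono_left nhdsWithin_le_nhds : Tendsto id (𝓝[>] (0 : ℝ)) (𝓝 0)).isBigO_one ℝ
  exact (hbdd.mul hσ.isBigO_mul_self).congr (fun x ↦ (sq x).symm) fun x ↦ by
    rw [one_mul, ← sq, Pi.pow_apply]

theorem exists_eventually_abs_sub_div_le (hσ : SquareRootDiffusion σ) {f h : ℝ → ℝ}
    (hf : DifferentiableWithinAt ℝ f (Ici 0) 0) (hh : DifferentiableWithinAt ℝ h (Ici 0) 0) :
    ∃ C, ∀ᶠ x in 𝓝[>] 0, (|f x - f 0| + |h x - h 0|) / σ x ≤ C := by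
  have isBigO_sub {f : ℝ → ℝ} (hf : DifferentiableWithinAt ℝ f (Ici 0) 0) :
      (fun x ↦ |f x - f 0|) =O[𝓝[>] 0] σ := by
    have hO := hf.isBigO_sub.mono (nhdsWithin_mono 0 Ioi_subset_Ici_self)
    simp only [sub_zero] at hO
    exact (hO.trans hσ.isBigO_self).norm_left
  obtain ⟨C, hC⟩ := ((isBigO_sub hf).add (isBigO_sub hh)).bound
  refine ⟨C, ?_⟩
  filter_upwards [hC, self_mem_nhdsWithin] with x hCx hx
  rw [Real.norm_of_nonneg (hσ.pos x hx).le] at hCx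
  exact (div_le_iff₀ (hσ.pos x hx)).2 ((le_abs_self _).trans hCx)

theorem continuousOn_inv (hσ : SquareRootDiffusion σ) :
    ContinuousOn (fun x ↦ (σ x)⁻¹) (Ioi 0) :=
  (hσ.continuousOn.mono Ioi_subset_Ici_self).inv₀ fun x hx ↦ (hσ.pos x hx).ne'

theorem isBigO_inv (hσ : SquareRootDiffusion σ) :
    (fun x ↦ (σ x)⁻¹) =O[𝓝[>] 0] fun x ↦ x ^ (-(1 / 2) : ℝ) := by
  refine IsBigO.of_pow two_ne_zero (((hσ.isBigO_mul_self.inv_rev ?_).congr' ?_ ?_))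
  · filter_upwards [self_mem_nhdsWithin] with x hx h0 using absurd h0 (ne_of_gt hx)
  · filter_upwards with x
    rw [Pi.pow_apply, inv_pow, sq]
  · filter_upwards [self_mem_nhdsWithin] with x hx
    rw [Pi.pow_apply, ← Real.rpow_mul_natCast (le_of_lt hx)]
    norm_num [Real.rpow_neg_one]

theorem integrableOn_inv (hσ : SquareRootDiffusion σ) (y : ℝ) :
    IntegrableOn (fun x ↦ (σ x)⁻¹) (Ioc 0 y) := by
  have hnear : IntegrableAtFilter (fun x ↦ (σ x)⁻¹) (𝓝[>] 0) volume := by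
    refine hσ.isBigO_inv.integrableAtFilter
      (hσ.continuousOn_inv.stronglyMeasurableAtFilter_nhdsWithin measurableSet_Ioi 0) ?_
    exact ⟨Ioc 0 1, Ioc_mem_nhdsGT one_pos, (intervalIntegrable_iff_integrableOn_Ioc_of_le
      zero_le_one).1 (intervalIntegral.intervalIntegrable_rpow' (by norm_num))⟩
  obtain ⟨s, hs, hint⟩ := hnear
  obtain ⟨ε, hε, hεs⟩ := mem_nhdsGT_iff_exists_Ioc_subset.1 hs
  have hfar : IntegrableOn (fun x ↦ (σ x)⁻¹) (Icc ε y) :=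
    (hσ.continuousOn_inv.mono fun x hx ↦ lt_of_lt_of_le hε hx.1).integrableOn_Icc
  refine ((hint.mono_set hεs).union hfar).mono_set fun x hx ↦ ?_
  exact (le_or_gt x ε).imp (fun h ↦ ⟨hx.1, h⟩) fun h ↦ ⟨h.le, hx.2⟩

theorem intervalIntegrable_inv (hσ : SquareRootDiffusion σ) {y : ℝ} (hy : 0 ≤ y) :
    IntervalIntegrable (fun x ↦ (σ x)⁻¹) volume 0 y :=
  (intervalIntegrable_iff_integrableOn_Ioc_of_le hy).2 (hσ.integrableOn_inv y)

theorem hasDerivAt_besselPhi (hσ : SquareRootDiffusion σ) {y : ℝ} (hy : 0 < y) :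
    HasDerivAt (besselPhi σ) (σ y)⁻¹ y :=
  intervalIntegral.integral_hasDerivAt_right (hσ.intervalIntegrable_inv hy.le)
    (hσ.continuousOn_inv.stronglyMeasurableAtFilter isOpen_Ioi y hy)
    (hσ.continuousOn_inv.continuousAt (Ioi_mem_nhds hy))

theorem continuousOn_besselPhi (hσ : SquareRootDiffusion σ) :
    ContinuousOn (besselPhi σ) (Ici 0) := fun y hy ↦ by
  have hprim := intervalIntegral.continuousOn_primitive_interval'
    (hσ.intervalIntegrable_inv (add_nonneg hy zero_le_one)) left_mem_uIcc
  rw [uIcc_of_le (add_nonneg hy zero_le_one)] at hprim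
  refine (hprim y ⟨hy, by linarith⟩).mono_of_mem_nhdsWithin ?_
  filter_upwards [self_mem_nhdsWithin, nhdsWithin_le_nhds (Iio_mem_nhds (lt_add_one y))]
    with z hz hzy using ⟨hz, hzy.le⟩

theorem strictMonoOn_besselPhi (hσ : SquareRootDiffusion σ) :
    StrictMonoOn (besselPhi σ) (Ici 0) := by
  refine strictMonoOn_of_deriv_pos (convex_Ici 0) hσ.continuousOn_besselPhi fun y hy ↦ ?_
  rw [interior_Ici] at hy
  rw [(hσ.hasDerivAt_besselPhi hy).deriv]
  exact inv_pos.2 (hσ.pos y hy)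

theorem bijOn_besselPhi (hσ : SquareRootDiffusion σ) : BijOn (besselPhi σ) (Ici 0) (Ici 0) := by
  have htop : Tendsto (besselPhi σ) atTop atTop := tendsto_atTop_atTop_of_hasDerivAt_inv
    ((eventually_gt_atTop 0).mono hσ.pos) hσ.isBigO_id
    ((eventually_gt_atTop 0).mono fun _ ↦ hσ.hasDerivAt_besselPhi)
  simpa only [besselPhi_zero] using
    bijOn_Ici_of_strictMonoOn hσ.strictMonoOn_besselPhi hσ.continuousOn_besselPhi htop

theorem invOn_besselInv (hσ : SquareRootDiffusion σ) :
    InvOn (besselInv σ) (besselPhi σ) (Ici 0) (Ici 0) :=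
  hσ.bijOn_besselPhi.invOn_invFunOn

theorem bijOn_besselInv (hσ : SquareRootDiffusion σ) : BijOn (besselInv σ) (Ici 0) (Ici 0) :=
  (bijOn_comm hσ.invOn_besselInv).2 hσ.bijOn_besselPhi

theorem besselInv_zero (hσ : SquareRootDiffusion σ) : besselInv σ 0 = 0 := by
  simpa only [besselPhi_zero] using hσ.invOn_besselInv.1 self_mem_Ici

theorem besselInv_pos (hσ : SquareRootDiffusion σ) {x : ℝ} (hx : 0 < x) : 0 < besselInv σ x := by
  refine (hσ.bijOn_besselInv.mapsTo hx.le).lt_of_ne' fun h ↦ hx.ne' ?_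
  exact hσ.bijOn_besselInv.injOn hx.le self_mem_Ici (h.trans hσ.besselInv_zero.symm)

theorem continuousOn_besselInv (hσ : SquareRootDiffusion σ) :
    ContinuousOn (besselInv σ) (Ici 0) :=
  continuousOn_of_monotoneOn_of_surjOn
    (Function.monotoneOn_of_rightInvOn_of_mapsTo hσ.strictMonoOn_besselPhi.monotoneOn
      hσ.invOn_besselInv.2 hσ.bijOn_besselInv.mapsTo)
    hσ.bijOn_besselInv.mapsTo hσ.bijOn_besselInv.surjOn

theorem hasDerivAt_besselInv (hσ : SquareRootDiffusion σ) {x : ℝ} (hx : 0 < x) :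
    HasDerivAt (besselInv σ) (σ (besselInv σ x)) x := by
  have hψ := hσ.besselInv_pos hx
  simpa only [inv_inv] using HasDerivAt.of_local_left_inverse
    (hσ.continuousOn_besselInv.continuousAt (Ici_mem_nhds hx)) (hσ.hasDerivAt_besselPhi hψ)
    (inv_pos.2 (hσ.pos _ hψ)).ne' (mem_of_superset (Ici_mem_nhds hx) hσ.invOn_besselInv.2)

theorem continuousOn_comp_besselInv (hσ : SquareRootDiffusion σ) {f : ℝ → ℝ}
    (hf : ContinuousOn f (Ici 0)) : ContinuousOn (fun x ↦ f (besselInv σ x)) (Ici 0) :=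
  hf.comp hσ.continuousOn_besselInv hσ.bijOn_besselInv.mapsTo

theorem contDiffOn_besselInv (hσ : SquareRootDiffusion σ) :
    ContDiffOn ℝ 1 (besselInv σ) (Ioi 0) :=
  contDiffOn_one_of_hasDerivAt isOpen_Ioi (fun _ ↦ hσ.hasDerivAt_besselInv)
    ((hσ.continuousOn_comp_besselInv hσ.continuousOn).mono Ioi_subset_Ici_self)

theorem hasDerivAt_comp_besselInv (hσ : SquareRootDiffusion σ) {f : ℝ → ℝ}
    (hf : DifferentiableOn ℝ f (Ici 0)) {x : ℝ} (hx : 0 < x) :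
    HasDerivAt (fun x ↦ f (besselInv σ x))
      (derivWithin f (Ici 0) (besselInv σ x) * σ (besselInv σ x)) x :=
  (hasDerivAt_derivWithin_Ici hf (hσ.besselInv_pos hx)).comp x (hσ.hasDerivAt_besselInv hx)

theorem hasDerivAt_self_comp_besselInv (hσ : SquareRootDiffusion σ) {x : ℝ} (hx : 0 < x) :
    HasDerivAt (fun x ↦ σ (besselInv σ x)) (sqDeriv σ (besselInv σ x) / 2) x := by
  have hψ := hσ.besselInv_pos hx
  refine ((hσ.hasDerivAt hψ).comp x (hσ.hasDerivAt_besselInv hx)).congr_deriv ?_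
  field_simp [(hσ.pos _ hψ).ne']

theorem tendsto_comp_besselInv (hσ : SquareRootDiffusion σ) {f : ℝ → ℝ}
    (hf : ContinuousOn f (Ici 0)) :
    Tendsto (fun x ↦ f (besselInv σ x)) (𝓝[>] 0) (𝓝 (f 0)) := by
  have hcont := (hσ.continuousOn_comp_besselInv hf 0 self_mem_Ici).mono Ioi_subset_Ici_self
  simpa only [ContinuousWithinAt, hσ.besselInv_zero] using hcont

theorem isBigO_besselInv (hσ : SquareRootDiffusion σ) :
    besselInv σ =O[𝓝[>] 0] fun x ↦ x := by
  have hO := isBigO_sub_pow_succ_of_hasDerivAt (n := 0)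
    (hσ.continuousOn_besselInv 0 self_mem_Ici)
    (eventually_mem_nhdsWithin.mono fun _ ↦ hσ.hasDerivAt_besselInv)
    (by simpa only [pow_zero] using
      (hσ.tendsto_comp_besselInv hσ.continuousOn).isBigO_one ℝ)
  simpa only [hσ.besselInv_zero, sub_zero, zero_add, pow_one] using hO

theorem isBigO_comp_besselInv_sub (hσ : SquareRootDiffusion σ) {f : ℝ → ℝ}
    (hf : DifferentiableWithinAt ℝ f (Ici 0) 0) :
    (fun x ↦ f (besselInv σ x) - f 0) =O[𝓝[>] 0] fun x ↦ x := by
  have hψ : Tendsto (besselInv σ) (𝓝[>] 0) (𝓝[≥] 0) :=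
    tendsto_nhdsWithin_of_tendsto_nhds_of_eventually_within _
      (hσ.tendsto_comp_besselInv continuousOn_id)
      (eventually_mem_nhdsWithin.mono fun _ hx ↦ (hσ.besselInv_pos hx).le)
  have hO := hf.isBigO_sub.comp_tendsto hψ
  simp only [Function.comp_def, sub_zero] at hO
  exact hO.trans hσ.isBigO_besselInv

theorem isBigO_self_comp_besselInv_sub (hσ : SquareRootDiffusion σ) :
    (fun x ↦ σ (besselInv σ x) - sqDeriv σ 0 / 2 * x) =O[𝓝[>] 0] fun x ↦ x ^ 2 := by
  have hcont : ContinuousOn (fun x ↦ σ (besselInv σ x) - sqDeriv σ 0 / 2 * x) (Ici 0) :=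
    (hσ.continuousOn_comp_besselInv hσ.continuousOn).sub (by fun_prop)
  have hF := hσ.isBigO_comp_besselInv_sub
    (hσ.contDiffOn_sqDeriv.differentiableOn one_ne_zero 0 self_mem_Ici)
  have hO := isBigO_sub_pow_succ_of_hasDerivAt (n := 1) (hcont 0 self_mem_Ici)
    (eventually_mem_nhdsWithin.mono fun x hx ↦
      (hσ.hasDerivAt_self_comp_besselInv hx).sub ((hasDerivAt_id x).const_mul (sqDeriv σ 0 / 2)))
    ((hF.const_mul_left (1 / 2)).congr (fun x ↦ by ring) fun x ↦ by ring)
  simpa only [hσ.besselInv_zero, hσ.map_zero, mul_zero, sub_zero] using hO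

theorem isBigO_self_comp_besselInv (hσ : SquareRootDiffusion σ) :
    (fun x ↦ x) =O[𝓝[>] 0] fun x ↦ σ (besselInv σ x) := by
  have hlin : (fun x ↦ x) =O[𝓝[>] 0] fun x ↦ sqDeriv σ 0 / 2 * x :=
    isBigO_self_const_mul (half_pos hσ.sqDeriv_zero_pos).ne' _ _
  have hequiv : (fun x ↦ σ (besselInv σ x)) ~[𝓝[>] 0] fun x ↦ sqDeriv σ 0 / 2 * x :=
    (hσ.isBigO_self_comp_besselInv_sub.trans_isLittleO
      ((isLittleO_pow_id one_lt_two).mono nhdsWithin_le_nhds)).trans_isBigO hlin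
  exact hlin.trans hequiv.isBigO_symm

theorem isBigO_inv_self_comp_besselInv (hσ : SquareRootDiffusion σ) :
    (fun x ↦ (σ (besselInv σ x))⁻¹) =O[𝓝[>] 0] fun x ↦ x⁻¹ :=
  hσ.isBigO_self_comp_besselInv.inv_rev <|
    eventually_mem_nhdsWithin.mono fun _ hx h0 ↦ absurd h0 (ne_of_gt hx)

end SquareRootDiffusion

/-- The drift `μ - ½σσ' = μ - ¼(σ·σ)'` of the Stratonovich form of the equation with Itô
coefficients `μ` and `σ`, which is the numerator of `besselG`. -/
def stratonovichDrift (μ σ : ℝ → ℝ) (y : ℝ) : ℝ := μ y - (1 / 4) * sqDeriv σ y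

namespace SquareRootDiffusion

variable {μ σ : ℝ → ℝ}

theorem contDiffOn_stratonovichDrift (hσ : SquareRootDiffusion σ)
    (hμ : ContDiffOn ℝ 1 μ (Ici 0)) : ContDiffOn ℝ 1 (stratonovichDrift μ σ) (Ici 0) :=
  hμ.sub (contDiffOn_const.mul hσ.contDiffOn_sqDeriv)

theorem hasDerivAt_besselG (hσ : SquareRootDiffusion σ) (hμ : ContDiffOn ℝ 1 μ (Ici 0)) {x : ℝ}
    (hx : 0 < x) :
    HasDerivAt (besselG μ σ) (derivWithin (stratonovichDrift μ σ) (Ici 0) (besselInv σ x)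
      - stratonovichDrift μ σ (besselInv σ x) * sqDeriv σ (besselInv σ x) / 2
        * (σ (besselInv σ x))⁻¹ ^ 2) x := by
  have hpos := (hσ.pos _ (hσ.besselInv_pos hx)).ne'
  refine ((hσ.hasDerivAt_comp_besselInv
    ((hσ.contDiffOn_stratonovichDrift hμ).differentiableOn one_ne_zero) hx).div
    (hσ.hasDerivAt_self_comp_besselInv hx) hpos).congr_deriv ?_
  field_simp

theorem contDiffOn_besselG (hσ : SquareRootDiffusion σ) (hμ : ContDiffOn ℝ 1 μ (Ici 0)) :
    ContDiffOn ℝ 1 (besselG μ σ) (Ioi 0) := by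
  have hm := hσ.contDiffOn_stratonovichDrift hμ
  have hinv := (hσ.continuousOn_comp_besselInv hσ.continuousOn).mono Ioi_subset_Ici_self |>.inv₀
    fun x hx ↦ (hσ.pos _ (hσ.besselInv_pos hx)).ne'
  refine contDiffOn_one_of_hasDerivAt isOpen_Ioi (fun _ ↦ hσ.hasDerivAt_besselG hμ) ?_
  exact ((hσ.continuousOn_comp_besselInv
      (hm.continuousOn_derivWithin (uniqueDiffOn_Ici 0) le_rfl)).mono Ioi_subset_Ici_self).sub
    ((((hσ.continuousOn_comp_besselInv (hm.continuousOn.mul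
      hσ.contDiffOn_sqDeriv.continuousOn)).mono Ioi_subset_Ici_self).div_const 2).mul
    (hinv.pow 2))

theorem isBigO_mul_besselG_sub (hσ : SquareRootDiffusion σ) (hμ : ContDiffOn ℝ 1 μ (Ici 0)) :
    (fun x ↦ x * besselG μ σ x - 2 * stratonovichDrift μ σ 0 / sqDeriv σ 0) =O[𝓝[>] 0]
      fun x ↦ x := by
  set c := 2 * stratonovichDrift μ σ 0 / sqDeriv σ 0 with hc
  have hm := hσ.isBigO_comp_besselInv_sub
    ((hσ.contDiffOn_stratonovichDrift hμ).differentiableOn one_ne_zero 0 self_mem_Ici)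
  have hnum : (fun x ↦ x * (stratonovichDrift μ σ (besselInv σ x) - stratonovichDrift μ σ 0)
      - c * (σ (besselInv σ x) - sqDeriv σ 0 / 2 * x)) =O[𝓝[>] 0] fun x ↦ x ^ 2 :=
    (((isBigO_refl _ _).mul hm).congr_right fun x ↦ (sq x).symm).sub
      (hσ.isBigO_self_comp_besselInv_sub.const_mul_left c)
  refine (hnum.mul hσ.isBigO_inv_self_comp_besselInv).congr' ?_ ?_
  · filter_upwards [self_mem_nhdsWithin] with x hx
    have hpos := (hσ.pos _ (hσ.besselInv_pos hx)).ne'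
    have hD := hσ.sqDeriv_zero_pos.ne'
    change _ = x * (stratonovichDrift μ σ (besselInv σ x) / σ (besselInv σ x)) - c
    rw [hc]
    field_simp
    ring
  · filter_upwards [self_mem_nhdsWithin] with x hx
    have hx0 : x ≠ 0 := ne_of_gt hx
    field_simp

theorem isBigO_deriv_besselG (hσ : SquareRootDiffusion σ) (hμ : ContDiffOn ℝ 1 μ (Ici 0)) :
    deriv (besselG μ σ) =O[𝓝[>] 0] fun x ↦ (x ^ 2)⁻¹ := by
  have hm := hσ.contDiffOn_stratonovichDrift hμ
  have hm' := (hσ.tendsto_comp_besselInv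
    (hm.continuousOn_derivWithin (uniqueDiffOn_Ici 0) le_rfl)).isBigO_one ℝ
  have hmF := ((hσ.tendsto_comp_besselInv
    (hm.continuousOn.mul hσ.contDiffOn_sqDeriv.continuousOn)).div_const 2).isBigO_one ℝ
  have hone : (fun _ ↦ (1 : ℝ)) =O[𝓝[>] 0] fun x : ℝ ↦ (x ^ 2)⁻¹ := by
    refine IsBigO.of_bound 1 ?_
    filter_upwards [Ioo_mem_nhdsGT one_pos] with x hx
    rw [norm_one, one_mul, norm_inv, norm_pow, Real.norm_of_nonneg hx.1.le]
    exact one_le_inv₀ (pow_pos hx.1 2) |>.2 (pow_le_one₀ hx.1.le hx.2.le)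
  refine ((hm'.trans hone).sub
    ((hmF.mul (hσ.isBigO_inv_self_comp_besselInv.pow 2)).congr_right fun x ↦ ?_)).congr' ?_ .rfl
  · rw [one_mul, inv_pow]
  · filter_upwards [self_mem_nhdsWithin] with x hx using (hσ.hasDerivAt_besselG hμ hx).deriv.symm

-- `(σ ∘ φ⁻¹)⁻²` blows up at `0`, but enters the derivative with a negative coefficient.
theorem isBoundedUnder_deriv_besselG (hσ : SquareRootDiffusion σ)
    (hμ : ContDiffOn ℝ 1 μ (Ici 0)) (hm0 : 0 < stratonovichDrift μ σ 0) :
    IsBoundedUnder (· ≤ ·) (𝓝[>] 0) (deriv (besselG μ σ)) := by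
  have hm := hσ.contDiffOn_stratonovichDrift hμ
  have hm' := (hσ.tendsto_comp_besselInv (hm.continuousOn_derivWithin (uniqueDiffOn_Ici 0) le_rfl))
  have hmF := (hσ.tendsto_comp_besselInv
    (hm.continuousOn.mul hσ.contDiffOn_sqDeriv.continuousOn)).eventually_const_lt
    (mul_pos hm0 hσ.sqDeriv_zero_pos)
  refine hm'.isBoundedUnder_le.mono_le ?_
  filter_upwards [hmF, self_mem_nhdsWithin] with x hmFx hx
  rw [(hσ.hasDerivAt_besselG hμ hx).deriv]
  exact sub_le_self _ (mul_nonneg (half_pos hmFx).le (sq_nonneg _))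

end SquareRootDiffusion

section SingularDrift

variable {g : ℝ → ℝ} {α L : ℝ} {n : ℕ}

theorem tendsto_mul_of_isBigO_sub (h0 : (fun x ↦ x * g x - α) =O[𝓝[>] 0] fun x ↦ x) :
    Tendsto (fun x ↦ x * g x) (𝓝[>] 0) (𝓝 α) :=
  tendsto_sub_nhds_zero_iff.1 (h0.trans_tendsto (tendsto_id.mono_left nhdsWithin_le_nhds))

theorem exists_abs_deriv_le (hg : ContDiffOn ℝ 1 g (Ioi 0))
    (h0 : deriv g =O[𝓝[>] 0] fun x ↦ (x ^ 2)⁻¹) (htop : deriv g =O[atTop] fun x ↦ x ^ n) :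
    ∃ M, ∀ z > 0, |deriv g z| ≤ M * ((z ^ 2)⁻¹ + z ^ n) :=
  exists_abs_le_mul_add_of_isBigO (hg.continuousOn_deriv_of_isOpen isOpen_Ioi le_rfl)
    ((continuousOn_pow 2).inv₀ fun _ hx ↦ pow_ne_zero 2 (ne_of_gt hx)) (continuousOn_pow n)
    (fun _ hx ↦ inv_pos.2 (pow_pos hx 2)) (fun _ hx ↦ pow_pos hx n) h0 htop

theorem exists_abs_mul_sub_le (hg : ContDiffOn ℝ 1 g (Ioi 0))
    (h0 : (fun x ↦ x * g x - α) =O[𝓝[>] 0] fun x ↦ x)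
    (htop : deriv g =O[atTop] fun x ↦ x ^ n) :
    ∃ C, ∀ x > 0, |x * g x - α| ≤ C * (x + x ^ (n + 2)) := by
  have hgtop := isBigO_pow_succ_atTop_of_deriv ((eventually_gt_atTop 0).mono fun x hx ↦
    (hg.differentiableOn one_ne_zero).differentiableAt (Ioi_mem_nhds hx)) htop
  have hpow : (fun x ↦ x * g x) =O[atTop] fun x : ℝ ↦ x ^ (n + 2) :=
    ((isBigO_refl _ _).mul hgtop).congr_right fun x ↦ (pow_succ' x (n + 1)).symm
  exact exists_abs_le_mul_add_of_isBigO
    ((continuousOn_id.mul hg.continuousOn).sub continuousOn_const) continuousOn_id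
    (continuousOn_pow _) (fun _ hx ↦ hx) (fun _ hx ↦ pow_pos hx _) h0
    (hpow.sub (isBigO_const_pow_succ_atTop α (n + 1)))

theorem exists_mul_le_of_one_sided_lipschitz (hg : ContinuousOn g (Ioi 0))
    (h0 : Tendsto (fun x ↦ x * g x) (𝓝[>] 0) (𝓝 α))
    (hL : ∀ x > 0, ∀ y > 0, (x - y) * (g x - g y) ≤ L * (x - y) ^ 2) :
    ∃ C, ∀ x > 0, x * g x ≤ C * (1 + x ^ 2) := by
  have hpos (x : ℝ) : 0 < 1 + x ^ 2 := by positivity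
  have hcont : Continuous fun x : ℝ ↦ 1 + x ^ 2 := by fun_prop
  obtain ⟨C, hC⟩ : BddAbove ((fun x ↦ x * g x / (1 + x ^ 2)) '' Ioi 0) := by
    refine bddAbove_image_Ioi
      ((continuousOn_id.mul hg).div hcont.continuousOn fun x _ ↦ (hpos x).ne')
      (h0.div ((hcont.tendsto 0).mono_left nhdsWithin_le_nhds) (hpos 0).ne').isBoundedUnder_le
      ⟨|g 1| + |L|, eventually_map.2 ?_⟩
    filter_upwards [eventually_gt_atTop 1] with x hx
    have hgx : g x - g 1 ≤ L * (x - 1) := by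
      refine le_of_mul_le_mul_left ?_ (sub_pos.2 hx)
      linarith [hL x (one_pos.trans hx) 1 one_pos]
    rw [div_le_iff₀ (hpos x)]
    calc x * g x ≤ x * (|g 1| + |L| * x) := by
          gcongr
          linarith [le_abs_self (g 1), mul_le_mul_of_nonneg_right (le_abs_self L) (sub_pos.2 hx).le,
            abs_nonneg L]
      _ = |g 1| * x + |L| * x ^ 2 := by ring
      _ ≤ |g 1| * (1 + x ^ 2) + |L| * (1 + x ^ 2) := by gcongr <;> nlinarith
      _ = (|g 1| + |L|) * (1 + x ^ 2) := by ring
  exact ⟨C, fun x hx ↦ (div_le_iff₀ (hpos x)).1 (hC (mem_image_of_mem _ hx))⟩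

theorem bijOn_sub_mul_of_one_sided_lipschitz (hα : 0 < α) (hg : ContinuousOn g (Ioi 0))
    (h0 : Tendsto (fun x ↦ x * g x) (𝓝[>] 0) (𝓝 α))
    (hL : ∀ x > 0, ∀ y > 0, (x - y) * (g x - g y) ≤ L * (x - y) ^ 2) {t : ℝ} (ht : 0 < t)
    (htL : t * L < 1) : BijOn (fun x ↦ x - t * g x) (Ioi 0) univ := by
  have hstep {x y : ℝ} (hy : 0 < y) (hyx : y < x) :
      (1 - t * L) * (x - y) ≤ (x - t * g x) - (y - t * g y) := by
    refine le_of_mul_le_mul_left ?_ (sub_pos.2 hyx)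
    linarith [mul_le_mul_of_nonneg_left (hL x (hy.trans hyx) y hy) ht.le]
  refine bijOn_Ioi_univ_of_strictMonoOn (fun y hy x _ hyx ↦ ?_)
    (continuousOn_id.sub (continuousOn_const.mul hg)) ?_ ?_
  · exact sub_pos.1 ((mul_pos (sub_pos.2 htL) (sub_pos.2 hyx)).trans_le (hstep hy hyx))
  · have hgtop : Tendsto g (𝓝[>] 0) atTop :=
      (h0.pos_mul_atTop hα tendsto_inv_nhdsGT_zero).congr' <| by
        filter_upwards [self_mem_nhdsWithin] with x hx
        field_simp [ne_of_gt (mem_Ioi.1 hx)]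
    have hneg := (tendsto_neg_atTop_atBot.comp (hgtop.const_mul_atTop ht))
    exact ((tendsto_id.mono_left nhdsWithin_le_nhds).add_atBot hneg).congr fun x ↦
      (sub_eq_add_neg _ _).symm
  · have hlin : Tendsto (fun x ↦ (1 - t * g 1) + (1 - t * L) * (x - 1)) atTop atTop :=
      tendsto_atTop_add_const_left _ _ <| (tendsto_atTop_add_const_right _ (-1)
        tendsto_id).const_mul_atTop (sub_pos.2 htL)
    refine tendsto_atTop_mono' _ ?_ hlin
    filter_upwards [eventually_gt_atTop 1] with x hx
    linarith [hstep one_pos hx]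

theorem eventually_abs_sub_le_rpow {M : ℝ} (hM : ∀ x > 0, ∀ y > 0,
      |g x - g y| ≤ M * |x - y| * (1 / (x * y) + x ^ n + y ^ n)) :
    ∀ᶠ c : ℝ in atTop, ∀ x > 0, ∀ y > 0,
      |g x - g y| ≤ c * |x - y| * (1 + 1 / (x * y) + x ^ c + y ^ c) := by
  filter_upwards [eventually_ge_atTop (n : ℝ), eventually_ge_atTop (2 * |M|)] with c hn hMc
    x hx y hy
  have hpow (z : ℝ) (hz : 0 < z) : z ^ n ≤ 1 + z ^ c := by
    simpa using rpow_le_rpow_add_rpow hz.le le_rfl (Nat.cast_nonneg n) hn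
  calc |g x - g y| ≤ M * |x - y| * (1 / (x * y) + x ^ n + y ^ n) := hM x hx y hy
    _ ≤ |M| * |x - y| * (1 / (x * y) + (1 + x ^ c) + (1 + y ^ c)) := by
      gcongr
      exacts [le_abs_self M, hpow x hx, hpow y hy]
    _ ≤ |M| * |x - y| * (2 * (1 + 1 / (x * y) + x ^ c + y ^ c)) := by
      gcongr
      have : 0 ≤ 1 / (x * y) := by positivity
      linarith [Real.rpow_nonneg hx.le c, Real.rpow_nonneg hy.le c]
    _ = 2 * |M| * |x - y| * (1 + 1 / (x * y) + x ^ c + y ^ c) := by ring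
    _ ≤ c * |x - y| * (1 + 1 / (x * y) + x ^ c + y ^ c) := by gcongr

theorem eventually_sub_le_mul_rpow {C : ℝ}
    (hC : ∀ x > 0, |x * g x - α| ≤ C * (x + x ^ (n + 2))) :
    ∀ᶠ c : ℝ in atTop, ∀ x > 0, α - c * (x + x ^ c) ≤ x * g x := by
  filter_upwards [eventually_ge_atTop ((n + 2 : ℕ) : ℝ), eventually_ge_atTop (2 * |C|)] with c hn
    hCc x hx
  have hpow : x ^ (n + 2) ≤ x + x ^ c := by
    have h := rpow_le_rpow_add_rpow hx.le zero_le_one (Nat.one_le_cast.2 (n + 1).succ_pos) hn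
    rwa [Real.rpow_natCast, Real.rpow_one] at h
  have hle : C * (x + x ^ (n + 2)) ≤ c * (x + x ^ c) :=
    calc C * (x + x ^ (n + 2)) ≤ |C| * (x + (x + x ^ c)) := by
          gcongr
          exact le_abs_self C
      _ ≤ |C| * (2 * (x + x ^ c)) := by
          gcongr
          linarith [Real.rpow_nonneg hx.le c]
      _ = 2 * |C| * (x + x ^ c) := by ring
      _ ≤ c * (x + x ^ c) := by gcongr
  linarith [neg_abs_le (x * g x - α), hC x hx]

theorem exists_growth_constant (hg : ContDiffOn ℝ 1 g (Ioi 0))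
    (h0 : (fun x ↦ x * g x - α) =O[𝓝[>] 0] fun x ↦ x)
    (h0' : deriv g =O[𝓝[>] 0] fun x ↦ (x ^ 2)⁻¹) (htop : deriv g =O[atTop] fun x ↦ x ^ n)
    (hL : ∀ x > 0, ∀ y > 0, (x - y) * (g x - g y) ≤ L * (x - y) ^ 2) :
    ∃ c, 0 ≤ c ∧ ∀ x > 0, ∀ y > 0,
      |g x - g y| ≤ c * |x - y| * (1 + 1 / (x * y) + x ^ c + y ^ c)
      ∧ α - c * (x + x ^ c) ≤ x * g x ∧ x * g x ≤ c * (1 + x ^ 2) := by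
  obtain ⟨M, hM⟩ := exists_abs_deriv_le hg h0' htop
  obtain ⟨A, hA⟩ := exists_abs_mul_sub_le hg h0 htop
  obtain ⟨B, hB⟩ := exists_mul_le_of_one_sided_lipschitz hg.continuousOn
    (tendsto_mul_of_isBigO_sub h0) hL
  obtain ⟨c, hc0, hlip, hlow, hBc⟩ := ((eventually_ge_atTop 0).and
    ((eventually_abs_sub_le_rpow fun x hx y hy ↦ abs_sub_le_of_abs_deriv_le
      (hg.differentiableOn one_ne_zero) hM hx hy).and
    ((eventually_sub_le_mul_rpow hA).and (eventually_ge_atTop B)))).exists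
  exact ⟨c, hc0, fun x hx y hy ↦ ⟨hlip x hx y hy, hlow x hx,
    (hB x hx).trans (mul_le_mul_of_nonneg_right hBc (by positivity))⟩⟩

end SingularDrift

theorem besselL_ne_top {μ σ : ℝ → ℝ} (hbdd : BddAbove (deriv (besselG μ σ) '' Ioi 0)) :
    besselL μ σ ≠ ⊤ := by
  obtain ⟨B, hB⟩ := hbdd
  exact ne_top_of_le_ne_top ENNReal.ofReal_ne_top
    (iSup₂_le fun z hz ↦ ENNReal.ofReal_le_ofReal (hB (mem_image_of_mem _ hz)))

theorem deriv_besselG_le_toReal_besselL {μ σ : ℝ → ℝ} (hL : besselL μ σ ≠ ⊤) {z : ℝ}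
    (hz : 0 < z) : deriv (besselG μ σ) z ≤ (besselL μ σ).toReal :=
  (ENNReal.ofReal_le_iff_le_toReal hL).1
    (le_iSup₂ (f := fun z (_ : z ∈ Ioi 0) ↦ ENNReal.ofReal (deriv (besselG μ σ) z)) z hz)

theorem eq_two_mul_stratonovichDrift_div {μ σ : ℝ → ℝ} {α : ℝ} (hD : sqDeriv σ 0 ≠ 0)
    (hα : α = 2 * μ 0 / sqDeriv σ 0 - 1 / 2) :
    α = 2 * stratonovichDrift μ σ 0 / sqDeriv σ 0 := by
  rw [hα, stratonovichDrift]
  field_simp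
  ring

theorem bounds_of_growth {μ σ g' : ℝ → ℝ} {ρ C : ℝ} (hσ : ∀ x, 0 ≤ x → 0 ≤ σ x)
    (h : ∀ᶠ x in atTop, max (μ x) 0 / x + σ x / x + |μ x| / x ^ ρ
      + max (g' x) 0 + |g' x| / x ^ ρ ≤ C) :
    σ =O[atTop] (fun x ↦ x) ∧ IsBoundedUnder (· ≤ ·) atTop g' ∧
      g' =O[atTop] fun x ↦ x ^ ⌈ρ⌉₊ := by
  have hterms : ∀ᶠ x in atTop, |σ x| / x ^ (1 : ℝ) ≤ C ∧ g' x ≤ C ∧ |g' x| / x ^ ρ ≤ C := by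
    filter_upwards [h, eventually_gt_atTop 0] with x hC hx
    rw [Real.rpow_one, abs_of_nonneg (hσ x hx.le)]
    have hσx : 0 ≤ σ x / x := div_nonneg (hσ x hx.le) hx.le
    have hμx : 0 ≤ max (μ x) 0 / x := by positivity
    have hμρ : 0 ≤ |μ x| / x ^ ρ := by positivity
    have hgρ : 0 ≤ |g' x| / x ^ ρ := by positivity
    refine ⟨?_, ?_, ?_⟩ <;> linarith [le_max_left (g' x) 0, le_max_right (g' x) 0]
  refine ⟨?_, ⟨C, eventually_map.2 (hterms.mono fun x hx ↦ hx.2.1)⟩,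
    (isBigO_rpow_of_abs_div_le (hterms.mono fun x hx ↦ hx.2.2)).trans
      (isBigO_rpow_natCeil_atTop ρ)⟩
  simpa only [Real.rpow_one] using isBigO_rpow_of_abs_div_le (hterms.mono fun x hx ↦ hx.1)

theorem one_sided_Lipschitz_and_growth_properties_of_transformed_drift_general
    {α : ℝ} {μ σ : ℝ → ℝ} {n : ℕ} (hα : 0 < α) (hμ : ContDiffOn ℝ 1 μ (Ici 0))
    (hσ : SquareRootDiffusion σ) (hαdef : α = 2 * μ 0 / sqDeriv σ 0 - 1 / 2)
    (hbdd : IsBoundedUnder (· ≤ ·) atTop (deriv (besselG μ σ)))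
    (htop : deriv (besselG μ σ) =O[atTop] fun x ↦ x ^ n) :
    (∀ y : ℝ, 0 ≤ y → IntegrableOn (fun z ↦ (σ z)⁻¹) (Ioc 0 y))
    ∧ BijOn (besselPhi σ) (Ici 0) (Ici 0)
    ∧ ContDiffOn ℝ 1 (besselInv σ) (Ioi 0)
    ∧ (∀ x : ℝ, 0 < x → 0 < σ (besselInv σ x))
    ∧ ContDiffOn ℝ 1 (besselG μ σ) (Ioi 0)
    ∧ besselL μ σ ≠ ⊤
    ∧ (∀ t : ℝ, 0 < t → ENNReal.ofReal t * besselL μ σ < 1 →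
        BijOn (fun x ↦ x - t * besselG μ σ x) (Ioi 0) univ)
    ∧ (∃ C : ℝ, ∀ᶠ x in 𝓝[>] (0 : ℝ),
        (|μ x - μ 0| + |sqDeriv σ x - sqDeriv σ 0|) / σ x ≤ C)
    ∧ ∃ c : ℝ, 0 ≤ c ∧ ∀ x y : ℝ, 0 < x → 0 < y →
        (x - y) * (besselG μ σ x - besselG μ σ y) ≤ (besselL μ σ).toReal * (x - y) ^ 2
        ∧ |besselG μ σ x - besselG μ σ y|
            ≤ c * |x - y| * (1 + 1 / (x * y) + x ^ c + y ^ c)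
        ∧ α - c * (x + x ^ c) ≤ x * besselG μ σ x
        ∧ x * besselG μ σ x ≤ c * (1 + x ^ 2) := by
  have hαm := eq_two_mul_stratonovichDrift_div hσ.sqDeriv_zero_pos.ne' hαdef
  have hm0 : 0 < stratonovichDrift μ σ 0 := by
    have := (div_pos_iff_of_pos_right hσ.sqDeriv_zero_pos).1 (hαm ▸ hα)
    linarith
  have hg := hσ.contDiffOn_besselG hμ
  have h0 := hσ.isBigO_mul_besselG_sub hμ
  rw [← hαm] at h0
  have hLtop : besselL μ σ ≠ ⊤ := besselL_ne_top <| bddAbove_image_Ioi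
    (hg.continuousOn_deriv_of_isOpen isOpen_Ioi le_rfl) (hσ.isBoundedUnder_deriv_besselG hμ hm0)
    hbdd
  have hL (x : ℝ) (hx : x > 0) (y : ℝ) (hy : y > 0) := sub_mul_sub_le_of_deriv_le
    (hg.differentiableOn one_ne_zero) (fun _ ↦ deriv_besselG_le_toReal_besselL hLtop) hx hy
  obtain ⟨c, hc0, hc⟩ := exists_growth_constant hg h0 (hσ.isBigO_deriv_besselG hμ) htop hL
  refine ⟨fun y _ ↦ hσ.integrableOn_inv y, hσ.bijOn_besselPhi, hσ.contDiffOn_besselInv,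
    fun x hx ↦ hσ.pos _ (hσ.besselInv_pos hx), hg, hLtop, fun t ht htL ↦ ?_,
    hσ.exists_eventually_abs_sub_div_le (hμ.differentiableOn one_ne_zero 0 self_mem_Ici)
      (hσ.contDiffOn_sqDeriv.differentiableOn one_ne_zero 0 self_mem_Ici),
    c, hc0, fun x y hx hy ↦ ⟨hL x hx y hy, hc x hx y hy⟩⟩
  exact bijOn_sub_mul_of_one_sided_lipschitz hα hg.continuousOn (tendsto_mul_of_isBigO_sub h0) hL ht
    (mul_toReal_lt_one ht.le htL)

theorem one_sided_Lipschitz_and_growth_properties_of_transformed_drift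
    (α : ℝ) (hα : 0 < α) (μ σ : ℝ → ℝ)
    (hμC1 : ContDiffOn ℝ 1 μ (Set.Ici 0))
    (hσcont : ContinuousOn σ (Set.Ici 0)) (hσnonneg : ∀ x : ℝ, 0 ≤ x → 0 ≤ σ x)
    (hσ0 : σ 0 = 0) (hσpos : ∀ x : ℝ, 0 < x → 0 < σ x)
    (hσσC2 : ContDiffOn ℝ 2 (fun x => σ x * σ x) (Set.Ici 0))
    (hD0pos : 0 < sqDeriv σ 0)
    (hαdef : α = 2 * μ 0 / sqDeriv σ 0 - 1 / 2)
    (hgrowth : ∃ ρ : ℝ, 1 ≤ ρ ∧ ∃ C : ℝ, ∀ᶠ x in Filter.atTop,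
      max (μ x) 0 / x + σ x / x + |μ x| / x ^ ρ
        + max (deriv (besselG μ σ) x) 0 + |deriv (besselG μ σ) x| / x ^ ρ ≤ C) :
    (∀ y : ℝ, 0 ≤ y → IntegrableOn (fun z => (σ z)⁻¹) (Set.Ioc 0 y))
    ∧ Set.BijOn (besselPhi σ) (Set.Ici 0) (Set.Ici 0)
    ∧ ContDiffOn ℝ 1 (besselInv σ) (Set.Ioi 0)
    ∧ (∀ x : ℝ, 0 < x → 0 < σ (besselInv σ x))
    ∧ ContDiffOn ℝ 1 (besselG μ σ) (Set.Ioi 0)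
    ∧ besselL μ σ ≠ ⊤
    ∧ (∀ t : ℝ, 0 < t → ENNReal.ofReal t * besselL μ σ < 1 →
        Set.BijOn (fun x => x - t * besselG μ σ x) (Set.Ioi 0) Set.univ)
    ∧ (∃ C : ℝ, ∀ᶠ x in 𝓝[>] (0:ℝ),
        (|μ x - μ 0| + |sqDeriv σ x - sqDeriv σ 0|) / σ x ≤ C)
    ∧ ∃ c : ℝ, 0 ≤ c ∧ ∀ x y : ℝ, 0 < x → 0 < y →
        (x - y) * (besselG μ σ x - besselG μ σ y) ≤ (besselL μ σ).toReal * (x - y) ^ 2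
        ∧ |besselG μ σ x - besselG μ σ y|
            ≤ c * |x - y| * (1 + 1 / (x * y) + x ^ c + y ^ c)
        ∧ α - c * (x + x ^ c) ≤ x * besselG μ σ x
        ∧ x * besselG μ σ x ≤ c * (1 + x ^ 2) := by
  obtain ⟨ρ, -, C, hC⟩ := hgrowth
  obtain ⟨hσO, hbdd, htop⟩ := bounds_of_growth hσnonneg hC
  exact one_sided_Lipschitz_and_growth_properties_of_transformed_drift_general hα hμC1
    ⟨hσ0, hσpos, hσσC2, hD0pos, hσO⟩ hαdef hbdd htop

end
end
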